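/- arXiv:1203.1720 — 3 statements merged into one kernel-verified Lean document; each statement's English description precedes it below -/
import Mathlib

section
/- Let Δ be a homology (d−1)-sphere over a field k and 1 ≤ r ≤ (d+1)/2 an integer. If Δ' is an (r−1)-stacked homology d-ball over k with ∂Δ' = Δ, then Δ' = Δ(d−r). In particular, an (r−1)-stacked homology d-ball with given boundary Δ is unique. -/
open Finset

variable {V : Type*} [DecidableEq V] [Fintype V]

/-- A (possibly empty) simplicial complex on the vertex set `V`,
given as its set of faces: a collection of finite subsets of `V`
closed under taking subsets. -/
def IsComplex (Δ : Set (Finset V)) : Prop :=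
  ∀ F ∈ Δ, ∀ G ⊆ F, G ∈ Δ

/-- `skc Δ i` is the complex `Δ(i) = {F ⊆ V : skelᵢ(2^F) ⊆ Δ}`:
all subsets `F` of `V` all of whose subsets of cardinality at most `i+1`
are faces of `Δ`. -/
def skc (Δ : Set (Finset V)) (i : ℕ) : Set (Finset V) :=
  {F | ∀ G ⊆ F, G.card ≤ i + 1 → G ∈ Δ}

/-- The `k`-skeleton of a complex: faces of cardinality at most `k+1`. -/
def skel (Δ : Set (Finset V)) (k : ℕ) : Set (Finset V) :=
  {F ∈ Δ | F.card ≤ k + 1}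

/-- A missing face of `Δ`: a non-face all of whose proper subsets are faces. -/
def IsMissingFace (Δ : Set (Finset V)) (F : Finset V) : Prop :=
  F ∉ Δ ∧ ∀ G ⊂ F, G ∈ Δ

/-- The link of a face. -/
def link (Δ : Set (Finset V)) (F : Finset V) : Set (Finset V) :=
  {G | Disjoint F G ∧ F ∪ G ∈ Δ}

/-- `numFacesCard Δ j` is `f_{j-1}(Δ)`, the number of faces of `Δ` of
cardinality `j`. -/
noncomputable def numFacesCard (Δ : Set (Finset V)) (j : ℕ) : ℕ :=
  {F : Finset V | F ∈ Δ ∧ F.card = j}.ncard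

/-- The `h`-numbers of a `(d-1)`-dimensional complex:
`h_i = ∑_{j=0}^{i} (-1)^{i-j} C(d-j, i-j) f_{j-1}`. -/
noncomputable def hVec (Δ : Set (Finset V)) (d i : ℕ) : ℤ :=
  ∑ j ∈ Finset.range (i + 1),
    (-1 : ℤ) ^ (i - j) * ((d - j).choose (i - j)) * (numFacesCard Δ j)

/- ### Reduced simplicial homology over a field -/

section Homology

variable (𝕜 : Type*) [Field 𝕜] [LinearOrder V]

/-- Simplicial chains supported on a given set of finite subsets of `V`. -/
def chainsOn (A : Set (Finset V)) : Submodule 𝕜 (Finset V → 𝕜) where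
  carrier := {f | ∀ G, f G ≠ 0 → G ∈ A}
  zero_mem' := by intro G hG; simp at hG
  add_mem' := by
    intro f g hf hg G hG
    by_cases h : f G = 0
    · exact hg G (by simpa [h] using hG)
    · exact hf G h
  smul_mem' := by
    intro c f hf G hG
    exact hf G (by intro h; simp [h] at hG)

/-- The boundary operator of the (augmented) simplicial chain complex on the
full simplex on `V`: `∂(e_F) = ∑_{v ∈ F} (-1)^{pos of v in F} e_{F \ v}`,
written in the dual form `(∂ f) G = ∑_{v ∉ G} (-1)^{#{u ∈ G : u < v}} f (G ∪ {v})`.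
The augmentation is included (singletons map onto the empty-set generator),
so the homology computed below is reduced homology. -/
noncomputable def bdryMap : (Finset V → 𝕜) →ₗ[𝕜] (Finset V → 𝕜) where
  toFun f := fun G => ∑ v ∈ Gᶜ,
    ((-1 : 𝕜) ^ ((G.filter (fun u => u < v)).card)) * f (insert v G)
  map_add' f g := by
    funext G
    simp [mul_add, Finset.sum_add_distrib]
  map_smul' c f := by
    funext G
    simp [Finset.mul_sum]
    congr 1; funext v; ring

/-- Reduced cycles of `Δ` in cardinality `c` (i.e. dimension `c-1`). -/
noncomputable def redCycles (Δ : Set (Finset V)) (c : ℕ) :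
    Submodule 𝕜 (Finset V → 𝕜) :=
  (chainsOn 𝕜 {F | F ∈ Δ ∧ F.card = c}) ⊓ LinearMap.ker (bdryMap 𝕜)

/-- Reduced boundaries of `Δ` in cardinality `c`. -/
noncomputable def redBdries (Δ : Set (Finset V)) (c : ℕ) :
    Submodule 𝕜 (Finset V → 𝕜) :=
  Submodule.map (bdryMap 𝕜) (chainsOn 𝕜 {F | F ∈ Δ ∧ F.card = c + 1})

/-- `redH 𝕜 Δ c` is the reduced simplicial homology `H̃_{c-1}(Δ; 𝕜)`
(indexed by the cardinality `c` of faces rather than the dimension `c-1`). -/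
noncomputable def redH (Δ : Set (Finset V)) (c : ℕ) : Type _ :=
  ↥(redCycles 𝕜 Δ c) ⧸
    Submodule.comap (redCycles 𝕜 Δ c).subtype (redBdries 𝕜 Δ c)

noncomputable instance (Δ : Set (Finset V)) (c : ℕ) :
    AddCommGroup (redH 𝕜 Δ c) := by
  unfold redH; infer_instance

noncomputable instance (Δ : Set (Finset V)) (c : ℕ) :
    Module 𝕜 (redH 𝕜 Δ c) := by
  unfold redH; infer_instance

/-- `Δ` is a homology `n`-sphere over `𝕜`: it is an `n`-dimensional complex
such that for every face `F` (including `∅`) the reduced homology of the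
link of `F` is that of a sphere of dimension `n - #F`, i.e.
`H̃_{c-1}(lk F) = 𝕜` if `c = n + 1 - #F` and `0` otherwise. -/
def IsHomologySphere (Δ : Set (Finset V)) (n : ℕ) : Prop :=
  IsComplex Δ ∧ (∀ F ∈ Δ, F.card ≤ n + 1) ∧ (∃ F ∈ Δ, F.card = n + 1) ∧
  ∀ F ∈ Δ, ∀ c : ℕ,
    Module.finrank 𝕜 (redH 𝕜 (link Δ F) c) =
      if c + F.card = n + 1 then 1 else 0

/-- The boundary faces of a `d`-dimensional homology ball:
those faces `F` whose link has vanishing top reduced homology. -/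
def bdryFaces (Δ : Set (Finset V)) (d : ℕ) : Set (Finset V) :=
  {F | F ∈ Δ ∧
    Module.finrank 𝕜 (redH 𝕜 (link Δ F) (d + 1 - F.card)) = 0}

/-- `Δ` is a homology `d`-ball over `𝕜`: a `d`-dimensional complex all of
whose links have reduced homology vanishing except possibly in the top
dimension `d - #F`, where it is `𝕜` or `0`, and whose boundary complex is
a homology `(d-1)`-sphere. -/
def IsHomologyBall (Δ : Set (Finset V)) (d : ℕ) : Prop :=
  IsComplex Δ ∧ (∀ F ∈ Δ, F.card ≤ d + 1) ∧ (∃ F ∈ Δ, F.card = d + 1) ∧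
  (∀ F ∈ Δ, ∀ c : ℕ,
    (c + F.card = d + 1 → Module.finrank 𝕜 (redH 𝕜 (link Δ F) c) ≤ 1) ∧
    (c + F.card ≠ d + 1 → Module.finrank 𝕜 (redH 𝕜 (link Δ F) c) = 0)) ∧
  IsHomologySphere 𝕜 (bdryFaces 𝕜 Δ d) (d - 1)

/-- A homology `d`-ball is `(r-1)`-stacked if it has no interior faces of
dimension at most `d - r`, i.e. every interior face has cardinality at
least `d - r + 2`. -/
def IsStackedBall (Δ : Set (Finset V)) (d r : ℕ) : Prop :=
  IsHomologyBall 𝕜 Δ d ∧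
  ∀ F ∈ Δ, F ∉ bdryFaces 𝕜 Δ d → d - r + 2 ≤ F.card

end Homology


namespace StackedAux

section

variable {V : Type*} [Fintype V] [LinearOrder V] (𝕜 : Type*) [Field 𝕜]

/-- The incidence sign. -/
def sg (G : Finset V) (v : V) : 𝕜 := (-1 : 𝕜) ^ ((G.filter (fun u => u < v)).card)

lemma bdry_apply (f : Finset V → 𝕜) (G : Finset V) :
    bdryMap 𝕜 f G = ∑ v ∈ Gᶜ, sg 𝕜 G v * f (insert v G) := by
  rfl

lemma sg_insert (G : Finset V) (v w : V) (hv : v ∉ G) :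
    sg 𝕜 (insert v G) w = (if v < w then -1 else 1) * sg 𝕜 G w := by
  unfold sg
  rw [Finset.filter_insert]
  split_ifs with h
  · rw [Finset.card_insert_of_notMem (by simp [hv]), pow_succ]; ring
  · simp

lemma sg_anti (G : Finset V) (v w : V) (hv : v ∉ G) (hw : w ∉ G) (hvw : v ≠ w) :
    sg 𝕜 G v * sg 𝕜 (insert v G) w = - (sg 𝕜 G w * sg 𝕜 (insert w G) v) := by
  rw [sg_insert 𝕜 G v w hv, sg_insert 𝕜 G w v hw]
  rcases lt_or_gt_of_ne hvw with h | h
  · simp [h, h.not_gt]; ring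
  · simp [h, h.not_gt]; ring

lemma sg_sq (G : Finset V) (v : V) : sg 𝕜 G v * sg 𝕜 G v = 1 := by
  unfold sg
  rw [← mul_pow]; simp

lemma bdry_bdry (f : Finset V → 𝕜) : bdryMap 𝕜 (bdryMap 𝕜 f) = 0 := by
  funext G
  rw [bdry_apply]
  simp only [bdry_apply, Finset.mul_sum]
  rw [Finset.sum_sigma']
  refine Finset.sum_involution (fun p _ => ⟨p.2, p.1⟩) ?_ ?_ ?_ ?_
  · rintro ⟨v, w⟩ h
    simp only [Finset.mem_sigma, Finset.mem_compl, Finset.mem_insert, not_or] at h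
    have := sg_anti 𝕜 G v w h.1 h.2.2 (Ne.symm h.2.1)
    simp only
    rw [Finset.insert_comm v w G, ← mul_assoc, ← mul_assoc, this]
    ring
  · rintro ⟨v, w⟩ h _ heq
    simp only [Finset.mem_sigma, Finset.mem_compl, Finset.mem_insert, not_or] at h
    simp only [Sigma.mk.injEq] at heq
    exact h.2.1 heq.1
  · rintro ⟨v, w⟩ h
    simp only [Finset.mem_sigma, Finset.mem_compl, Finset.mem_insert, not_or] at h ⊢
    exact ⟨h.2.2, Ne.symm h.2.1, h.1⟩
  · rintro ⟨v, w⟩ h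
    rfl

/-- Every cycle of `K` in cardinality `c` is a boundary. -/
def Acyc (K : Set (Finset V)) (c : ℕ) : Prop :=
  ∀ z : Finset V → 𝕜, (∀ G, z G ≠ 0 → G ∈ K ∧ G.card = c) → bdryMap 𝕜 z = 0 →
    ∃ y : Finset V → 𝕜, (∀ G, y G ≠ 0 → G ∈ K ∧ G.card = c + 1) ∧ bdryMap 𝕜 y = z

lemma acyc_of_finrank (K : Set (Finset V)) (c : ℕ)
    (h : Module.finrank 𝕜 (redH 𝕜 K c) = 0) : Acyc 𝕜 K c := by
  intro z hz hz0
  have h' : Module.finrank 𝕜 (↥(redCycles 𝕜 K c) ⧸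
      Submodule.comap (redCycles 𝕜 K c).subtype (redBdries 𝕜 K c)) = 0 := h
  have hs := Module.finrank_zero_iff.mp h'
  rw [Submodule.Quotient.subsingleton_iff] at hs
  have hzc : z ∈ redCycles 𝕜 K c := ⟨hz, hz0⟩
  have : (⟨z, hzc⟩ : redCycles 𝕜 K c) ∈
      Submodule.comap (redCycles 𝕜 K c).subtype (redBdries 𝕜 K c) := by
    rw [hs]; trivial
  obtain ⟨y, hy, hyz⟩ := this
  exact ⟨y, hy, hyz⟩

lemma acyc_del (K L : Set (Finset V)) (w : V) (c : ℕ) (hK : IsComplex K)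
    (hL : ∀ G, G ∈ L ↔ w ∉ G ∧ insert w G ∈ K)
    (h1 : Acyc 𝕜 K c) (h2 : Acyc 𝕜 L c) : Acyc 𝕜 {G | G ∈ K ∧ w ∉ G} c := by
  intro z hz hz0
  obtain ⟨y, hy, hyz⟩ := h1 z (fun G hG => ⟨(hz G hG).1.1, (hz G hG).2⟩) hz0
  have hzw : ∀ G, w ∈ G → z G = 0 := by
    intro G hG
    by_contra h
    exact (hz G h).1.2 hG
  let y1 : Finset V → 𝕜 := fun G => if w ∈ G then 0 else sg 𝕜 G w * y (insert w G)
  have hy1 : ∀ G, y1 G ≠ 0 → G ∈ L ∧ G.card = c := by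
    intro G hG
    by_cases hw : w ∈ G
    · simp [y1, hw] at hG
    · have : y (insert w G) ≠ 0 := by
        intro h0; simp [y1, h0] at hG
      obtain ⟨a, b⟩ := hy _ this
      rw [Finset.card_insert_of_notMem hw] at b
      exact ⟨(hL G).2 ⟨hw, a⟩, by omega⟩
  have hy1c : bdryMap 𝕜 y1 = 0 := by
    funext G
    rw [bdry_apply]
    by_cases hw : w ∈ G
    · simp [y1, hw]
    · have e := congrFun hyz (insert w G)
      rw [hzw _ (Finset.mem_insert_self w G), bdry_apply] at e
      have hs : Gᶜ = insert w (insert w G)ᶜ := by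
        ext u; simp only [Finset.mem_compl, Finset.mem_insert]
        by_cases hu : u = w
        · simp [hu, hw]
        · simp [hu]
      rw [hs, Finset.sum_insert (by simp)]
      have : ∑ v ∈ (insert w G)ᶜ, sg 𝕜 G v * y1 (insert v G)
          = - sg 𝕜 G w * ∑ v ∈ (insert w G)ᶜ, sg 𝕜 (insert w G) v * y (insert v (insert w G)) := by
        rw [Finset.mul_sum]
        refine Finset.sum_congr rfl fun v hv => ?_
        simp only [Finset.mem_compl, Finset.mem_insert, not_or] at hv
        have a := sg_anti 𝕜 G v w hv.2 hw hv.1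
        have : y1 (insert v G) = sg 𝕜 (insert v G) w * y (insert w (insert v G)) := by
          simp [y1, hw, Ne.symm hv.1]
        rw [this, Finset.insert_comm w v G, ← mul_assoc, a]
        ring
      rw [this, e]
      simp [y1]
  obtain ⟨x, hx, hxy⟩ := h2 y1 hy1 hy1c
  have hxw : ∀ G, w ∈ G → x G = 0 := by
    intro G hG
    by_contra h
    exact ((hL G).1 (hx G h).1).1 hG
  refine ⟨fun G => if w ∈ G then 0 else y G + x G, ?_, ?_⟩
  · intro G hG
    by_cases hw : w ∈ G
    · simp [hw] at hG
    · simp only [hw, if_false] at hG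
      by_cases h : y G = 0
      · have hx' : x G ≠ 0 := by simpa [h] using hG
        obtain ⟨a, b⟩ := hx G hx'
        exact ⟨⟨hK _ ((hL G).1 a).2 _ (Finset.subset_insert w G), hw⟩, b⟩
      · obtain ⟨a, b⟩ := hy G h
        exact ⟨⟨a, hw⟩, b⟩
  · funext G
    rw [bdry_apply]
    by_cases hw : w ∈ G
    · simp [hw, hzw G hw]
    · have hs : w ∈ Gᶜ := by simpa using hw
      have e1 := congrFun hyz G
      have e2 := congrFun hxy G
      rw [bdry_apply, ← Finset.add_sum_erase _ _ hs] at e1 e2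
      rw [← Finset.add_sum_erase _ _ hs]
      have e3 : ∑ v ∈ Gᶜ.erase w, sg 𝕜 G v *
          (if w ∈ insert v G then 0 else y (insert v G) + x (insert v G))
          = ∑ v ∈ Gᶜ.erase w, sg 𝕜 G v * y (insert v G)
            + ∑ v ∈ Gᶜ.erase w, sg 𝕜 G v * x (insert v G) := by
        rw [← Finset.sum_add_distrib]
        refine Finset.sum_congr rfl fun v hv => ?_
        have : w ≠ v := (Finset.ne_of_mem_erase hv).symm
        simp [hw, this, mul_add]
      rw [e3]
      rw [hxw _ (Finset.mem_insert_self w G)] at e2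
      simp only [y1, hw, if_false, mul_zero, zero_add] at e2
      rw [e2, ← e1]
      simp
      ring

lemma acyc_restrict (D : Set (Finset V)) (hD : IsComplex D) (c : ℕ)
    (h : ∀ B ∈ D, Acyc 𝕜 (link D B) c) (U : Finset V) :
    ∀ B : Finset V, Acyc 𝕜 {G | G ∈ link D B ∧ Disjoint G U} c := by
  induction U using Finset.induction_on with
  | empty =>
    intro B
    by_cases hB : B ∈ D
    · simpa using h B hB
    · intro z hz hz0
      have : z = 0 := by
        funext G
        by_contra hG
        exact hB (hD _ (hz G hG).1.1.2 _ Finset.subset_union_left)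
      exact ⟨0, by simp, by simp [this]⟩
  | insert w U hw ih =>
    intro B
    by_cases hwB : w ∈ B
    · have : {G | G ∈ link D B ∧ Disjoint G (insert w U)} =
          {G | G ∈ link D B ∧ Disjoint G U} := by
        ext G
        simp only [Set.mem_setOf_eq, Finset.disjoint_insert_right]
        constructor
        · rintro ⟨a, b, c⟩; exact ⟨a, c⟩
        · rintro ⟨a, c⟩; exact ⟨a, Finset.disjoint_left.1 a.1 hwB, c⟩
      rw [this]; exact ih B
    · have key := acyc_del 𝕜 {G | G ∈ link D B ∧ Disjoint G U}
        {G | G ∈ link D (insert w B) ∧ Disjoint G U} w c ?_ ?_ (ih B) (ih (insert w B))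
      · convert key using 1
        ext G
        simp only [Set.mem_setOf_eq, Finset.disjoint_insert_right]
        tauto
      · rintro F ⟨⟨a, b⟩, e⟩ G hG
        exact ⟨⟨a.mono_right hG, hD _ b _ (Finset.union_subset_union_right hG)⟩, e.mono_left hG⟩
      · intro G
        simp only [link, Set.mem_setOf_eq, Finset.disjoint_insert_left,
          Finset.disjoint_insert_right, Finset.insert_union, Finset.union_insert]
        tauto

lemma no_missing (D : Set (Finset V)) (F : Finset V) (hF : F.Nonempty)
    (hsub : ∀ G ⊂ F, G ∈ D)
    (h : Acyc 𝕜 {G | G ∈ D ∧ G ⊆ F} (F.card - 1)) : F ∈ D := by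
  by_contra hFD
  have hc : 0 < F.card := hF.card_pos
  let e : Finset V → 𝕜 := fun G => if G = F then 1 else 0
  obtain ⟨y, hy, hyz⟩ := h (bdryMap 𝕜 e) (by
    intro G hG
    rw [bdry_apply] at hG
    obtain ⟨v, hv, hne⟩ := Finset.exists_ne_zero_of_sum_ne_zero hG
    have hvF : insert v G = F := by
      by_contra h'; simp [e, h'] at hne
    have hvG : v ∉ G := by simpa using hv
    have hss : G ⊂ F := hvF ▸ Finset.ssubset_insert hvG
    refine ⟨⟨hsub G hss, hss.1⟩, ?_⟩
    rw [← hvF, Finset.card_insert_of_notMem hvG]; simp) (bdry_bdry 𝕜 e)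
  have hy0 : y = 0 := by
    funext G
    by_contra hG
    obtain ⟨⟨a, b⟩, c⟩ := hy G hG
    have : G = F := Finset.eq_of_subset_of_card_le b (by omega)
    exact hFD (this ▸ a)
  rw [hy0, map_zero] at hyz
  obtain ⟨v, hv⟩ := hF
  have e1 := congrFun hyz (F.erase v)
  rw [bdry_apply, Finset.sum_eq_single v] at e1
  · rw [Finset.insert_erase hv] at e1
    simp only [e, if_true, mul_one, Pi.zero_apply] at e1
    have := sg_sq 𝕜 (F.erase v) v
    rw [← e1] at this
    simp at this
  · intro u hu huv
    have : insert u (F.erase v) ≠ F := by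
      intro h'
      have : v ∈ insert u (F.erase v) := by rw [h']; exact hv
      simp [Ne.symm huv] at this
    simp [e, this]
  · intro h'; simp at h'

end

end StackedAux

theorem stacked_ball_unique
    {V : Type*} [Fintype V] [LinearOrder V] (𝕜 : Type*) [Field 𝕜]
    (Δ Δ' : Set (Finset V)) (d r : ℕ)
    (hr1 : 1 ≤ r) (hr2 : 2 * r ≤ d + 1)
    (hsphere : IsHomologySphere 𝕜 Δ (d - 1))
    (hstacked : IsStackedBall 𝕜 Δ' d r)
    (hbdry : bdryFaces 𝕜 Δ' d = Δ) :
    Δ' = skc Δ (d - r) := by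
  obtain ⟨⟨hD, hcard, -, hlk, -⟩, hint⟩ := hstacked
  have hsm : ∀ G ∈ Δ', G.card ≤ d - r + 1 → G ∈ bdryFaces 𝕜 Δ' d := by
    intro G hG hc
    by_contra h
    have := hint G hG h
    omega
  have hac : ∀ c, r ≤ c → ∀ B ∈ Δ', StackedAux.Acyc 𝕜 (link Δ' B) c := by
    intro c hc B hB
    apply StackedAux.acyc_of_finrank
    by_cases h : c + B.card = d + 1
    · have := (hsm B hB (by omega)).2
      rwa [show d + 1 - B.card = c by omega] at this
    · exact (hlk B hB c).2 h
  apply Set.Subset.antisymm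
  · intro F hF G hG hc
    rw [← hbdry]
    exact hsm G (hD F hF G hG) hc
  · intro F hF
    have key : ∀ n : ℕ, ∀ G ⊆ F, G.card = n → G ∈ Δ' := by
      intro n
      induction n using Nat.strong_induction_on with
      | _ n ih =>
        intro G hG hn
        by_cases hc : G.card ≤ d - r + 1
        · have := hF G hG hc
          rw [← hbdry] at this
          exact this.1
        · apply StackedAux.no_missing 𝕜 Δ' G (Finset.card_pos.1 (by omega))
          · intro H hH
            exact ih H.card (hn ▸ Finset.card_lt_card hH) H (hH.1.trans hG) rfl
          · have := StackedAux.acyc_restrict 𝕜 Δ' hD (G.card - 1)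
              (hac _ (by omega)) Gᶜ ∅
            convert this using 1
            ext H
            have : H ⊆ G ↔ Disjoint H Gᶜ := (disjoint_compl_right_iff (x := H) (y := G)).symm
            simp [link, this]
    exact key _ F (Finset.Subset.refl F) rfl
end

section
/- Let Δ be the boundary complex of a simplicial d-polytope P with vertex set V ⊂ ℝ^d, let 1 ≤ r ≤ d/2, and suppose h_{r−1}(P) = h_r(P) (so that Δ(r−1) = Δ(d−r) and Δ(r−1) is pure of dimension d by Cohen–Macaulayness). Then for any two faces F_1, F_2 of Δ' := Δ(r−1), the convex hulls satisfy conv(F_1) ∩ conv(F_2) = conv(F_1 ∩ F_2), and every face F of Δ' spans a simplex of dimension #F − 1; i.e., taking convex hulls of faces of Δ' yields a geometric realization of Δ'. -/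
open Finset

variable {V : Type*} [DecidableEq V] [Fintype V]

/- ### Polytopes and boundary complexes -/

section Polytope

variable {V : Type*} [Fintype V] [DecidableEq V] {d : ℕ}

/-- `Δ` is the boundary complex of the polytope `conv(pos(V)) ⊆ ℝ^d` with
vertex images `pos v`: the faces of `Δ` are exactly the vertex sets of the
proper faces of the polytope, i.e. the sets of vertices lying on a
supporting hyperplane. -/
def IsBoundaryComplexOf (pos : V → EuclideanSpace ℝ (Fin d))
    (Δ : Set (Finset V)) : Prop :=
  ∀ F : Finset V, F ∈ Δ ↔
    ∃ (ℓ : EuclideanSpace ℝ (Fin d) →ₗ[ℝ] ℝ) (c : ℝ),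
      (∀ v, ℓ (pos v) ≤ c) ∧ (∀ v, ℓ (pos v) = c ↔ v ∈ F) ∧ (∃ v, ℓ (pos v) < c)

/-- `pos` and `Δ` describe a simplicial `d`-polytope `P = conv(pos(V)) ⊆ ℝ^d`
with boundary complex `Δ`: the points `pos v` are in convex position and
affinely span `ℝ^d` (so `P` is full dimensional with vertex set `pos(V)`),
`Δ` is the boundary complex of `P`, and every proper face of `P` is a
simplex. -/
def IsSimplicialPolytope (pos : V → EuclideanSpace ℝ (Fin d))
    (Δ : Set (Finset V)) : Prop :=
  IsBoundaryComplexOf pos Δ ∧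
  affineSpan ℝ (Set.range pos) = ⊤ ∧
  (∀ v : V, pos v ∉ convexHull ℝ (pos '' {u | u ≠ v})) ∧
  (∀ F ∈ Δ, AffineIndependent ℝ (fun x : {x // x ∈ F} => pos x))

end Polytope

/-- A face of `Δ` cannot be the positive support of an affine dependence. -/
theorem pos_support_not_face {V : Type*} [Fintype V] [DecidableEq V] {d : ℕ}
    (pos : V → EuclideanSpace ℝ (Fin d)) (Δ : Set (Finset V))
    (hb : IsBoundaryComplexOf pos Δ) (w : V → ℝ)
    (h0 : ∑ v, w v = 0) (h1 : ∑ v, w v • pos v = 0) (hne : ∃ v, w v ≠ 0)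
    (hA : (univ.filter fun v => 0 < w v) ∈ Δ) : False := by
  obtain ⟨ℓ, c, hle, heq, -⟩ := (hb _).1 hA
  have e1 : ∑ v, w v * ℓ (pos v) = 0 := by
    have := congrArg ℓ h1
    simpa [map_sum] using this
  have e2 : ∑ v, w v * (ℓ (pos v) - c) = 0 := by
    simp only [mul_sub, Finset.sum_sub_distrib, e1, ← Finset.sum_mul, h0]
    simp
  have hnn : ∀ v ∈ (univ : Finset V), 0 ≤ w v * (ℓ (pos v) - c) := by
    intro v _
    by_cases hv : 0 < w v
    · have : ℓ (pos v) = c := (heq v).2 (by simpa using hv)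
      simp [this]
    · have := hle v
      exact mul_nonneg_of_nonpos_of_nonpos (by linarith) (by linarith)
  have hz := (Finset.sum_eq_zero_iff_of_nonneg hnn).1 e2
  have hw : ∀ v ∈ (univ : Finset V), 0 ≤ w v := by
    intro v hv
    by_contra hneg
    have h3 : ℓ (pos v) = c := by
      rcases mul_eq_zero.1 (hz v hv) with h | h <;> linarith
    have := (heq v).1 h3
    simp at this
    linarith
  obtain ⟨v, hv⟩ := hne
  exact hv ((Finset.sum_eq_zero_iff_of_nonneg hw).1 h0 v (mem_univ v))

/-- Conformal reduction of the support of an affine dependence. -/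
theorem conformal_reduce {V : Type*} [Fintype V] [DecidableEq V] {d : ℕ}
    (pos : V → EuclideanSpace ℝ (Fin d)) (hinj : Function.Injective pos) (w : V → ℝ)
    (h0 : ∑ v, w v = 0) (h1 : ∑ v, w v • pos v = 0)
    (hcard : d + 2 < (univ.filter fun v => w v ≠ 0).card) :
    ∃ w' : V → ℝ, ∑ v, w' v = 0 ∧ ∑ v, w' v • pos v = 0 ∧ (∃ v, w' v ≠ 0) ∧
      (∀ v, 0 < w' v → 0 < w v) ∧ (∀ v, w' v < 0 → w v < 0) ∧
      (univ.filter fun v => w' v ≠ 0).card < (univ.filter fun v => w v ≠ 0).card := by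
  obtain ⟨s0, hs0⟩ : (univ.filter fun v => w v ≠ 0).Nonempty := Finset.card_pos.1 (by omega)
  set S := (univ.filter fun v => w v ≠ 0) with hS
  have hc : Module.finrank ℝ (EuclideanSpace ℝ (Fin d)) + 1 < ((S.erase s0).image pos).card := by
    rw [Finset.card_image_of_injective _ hinj, Finset.card_erase_of_mem hs0]
    simp
    omega
  obtain ⟨f, hf1, hf0, x, hx, hfx⟩ :=
    Module.exists_nontrivial_relation_sum_zero_of_finrank_succ_lt_card hc
  rw [Finset.sum_image hinj.injOn] at hf1 hf0
  obtain ⟨y, hy, rfl⟩ := Finset.mem_image.1 hx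
  obtain ⟨u, hu0, hu1, huS, z, hz⟩ : ∃ u : V → ℝ, ∑ v, u v = 0 ∧ ∑ v, u v • pos v = 0 ∧
      (∀ v, u v ≠ 0 → v ∈ S.erase s0) ∧ ∃ z, 0 < w z * u z := by
    have key : ∃ u : V → ℝ, ∑ v, u v = 0 ∧ ∑ v, u v • pos v = 0 ∧
      (∀ v, u v ≠ 0 → v ∈ S.erase s0) ∧ u y ≠ 0 := by
      refine ⟨fun v => if v ∈ S.erase s0 then f (pos v) else 0, ?_, ?_, ?_, ?_⟩
      · rw [← Finset.sum_filter, Finset.filter_mem_eq_inter, Finset.univ_inter]; exact hf0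
      · simp only [ite_smul, zero_smul]
        rw [← Finset.sum_filter, Finset.filter_mem_eq_inter, Finset.univ_inter]; exact hf1
      · intro v hv
        by_contra h
        simp only [h, if_false] at hv
        exact hv rfl
      · simp only [hy, if_true]; exact hfx
    obtain ⟨u, a, b, c, e⟩ := key
    have hwy : w y ≠ 0 := (Finset.mem_filter.1 (Finset.mem_of_mem_erase hy)).2
    rcases lt_or_gt_of_ne (mul_ne_zero hwy e) with h | h
    · refine ⟨fun v => - u v, by simp [a], by simp [b], fun v hv => c v (by simpa using hv), y, ?_⟩
      simp only [mul_neg]; linarith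
    · exact ⟨u, a, b, c, y, h⟩
  obtain ⟨m, hm, hmin⟩ := Finset.exists_min_image (univ.filter fun v => 0 < w v * u v)
    (fun v => w v / u v) ⟨z, by simpa using hz⟩
  have hm' : 0 < w m * u m := (Finset.mem_filter.1 hm).2
  have hum : u m ≠ 0 := by rintro h; simp [h] at hm'
  have ht : 0 < w m / u m := by
    have : w m / u m = (w m * u m) / (u m ^ 2) := by field_simp
    rw [this]; positivity
  set t := w m / u m with htdef
  have conf1 : ∀ v, 0 < w v - t * u v → 0 < w v := by
    intro v hv
    by_contra hw
    have hu : u v < 0 := by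
      by_contra h
      have := mul_nonneg ht.le (not_lt.1 h)
      linarith
    have hwv : w v ≠ 0 := (Finset.mem_filter.1 (Finset.mem_of_mem_erase (huS v hu.ne))).2
    have hwv' : w v < 0 := lt_of_le_of_ne (not_lt.1 hw) hwv
    have := hmin v (by simpa using mul_pos_of_neg_of_neg hwv' hu)
    rw [le_div_iff_of_neg hu] at this
    linarith
  have conf2 : ∀ v, w v - t * u v < 0 → w v < 0 := by
    intro v hv
    by_contra hw
    have hu : 0 < u v := by
      by_contra h
      have := mul_nonneg ht.le (neg_nonneg.2 (not_lt.1 h))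
      linarith
    have hwv : w v ≠ 0 := (Finset.mem_filter.1 (Finset.mem_of_mem_erase (huS v hu.ne'))).2
    have hwv' : 0 < w v := lt_of_le_of_ne (not_lt.1 hw) hwv.symm
    have := hmin v (by simpa using mul_pos hwv' hu)
    rw [le_div_iff₀ hu] at this
    linarith
  refine ⟨fun v => w v - t * u v, ?_, ?_, ⟨s0, ?_⟩, conf1, conf2, ?_⟩
  · simp [Finset.sum_sub_distrib, ← Finset.mul_sum, h0, hu0]
  · simp [sub_smul, Finset.sum_sub_distrib, mul_smul, ← Finset.smul_sum, h1, hu1]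
  · have : u s0 = 0 := by
      by_contra h
      simpa using huS s0 h
    simpa [this] using (Finset.mem_filter.1 hs0).2
  · apply Finset.card_lt_card
    refine ⟨fun v hv => ?_, fun h => ?_⟩
    · have hv' : w v - t * u v ≠ 0 := (Finset.mem_filter.1 hv).2
      rw [hS, Finset.mem_filter]
      refine ⟨mem_univ v, ?_⟩
      rcases lt_or_gt_of_ne hv' with h | h
      · exact (conf2 v h).ne
      · exact (conf1 v h).ne'
    · have hmS : m ∈ S := Finset.mem_of_mem_erase (huS m hum)
      have := (Finset.mem_filter.1 (h hmS)).2
      apply this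
      rw [htdef]
      field_simp
      simp

/-- No affine dependence has its positive part and its negative part supported on faces
of `Δ(d-r)`. -/
theorem no_dependence {V : Type*} [Fintype V] [DecidableEq V] {d : ℕ} (r : ℕ)
    (hr2 : 2 * r ≤ d)
    (pos : V → EuclideanSpace ℝ (Fin d)) (hinj : Function.Injective pos) (Δ : Set (Finset V))
    (hb : IsBoundaryComplexOf pos Δ)
    (F₁ F₂ : Finset V) (hF₁ : F₁ ∈ skc Δ (d - r)) (hF₂ : F₂ ∈ skc Δ (d - r)) :
    ∀ (n : ℕ) (w : V → ℝ), (univ.filter fun v => w v ≠ 0).card ≤ n →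
    ∑ v, w v = 0 → ∑ v, w v • pos v = 0 →
    (∀ v, 0 < w v → v ∈ F₁) → (∀ v, w v < 0 → v ∈ F₂) → ∀ v, w v = 0 := by
  intro n
  induction n with
  | zero =>
    intro w hn _ _ _ _ v
    have := Finset.card_eq_zero.1 (Nat.le_zero.1 hn)
    by_contra h
    have hv : v ∈ (univ.filter fun v => w v ≠ 0) := by simpa using h
    rw [this] at hv
    simp at hv
  | succ n ih =>
    intro w hn h0 h1 hp hm
    by_contra hne
    push Not at hne
    by_cases hc : d + 2 < (univ.filter fun v => w v ≠ 0).card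
    · obtain ⟨w', a, b, ⟨v, hv⟩, c, e, hlt⟩ := conformal_reduce pos hinj w h0 h1 hc
      exact hv (ih w' (by omega) a b (fun v h => hp v (c v h)) (fun v h => hm v (e v h)) v)
    · have hA : d - r + 1 < (univ.filter fun v => 0 < w v).card := by
        by_contra h
        refine pos_support_not_face pos Δ hb w h0 h1 hne (hF₁ _ ?_ (by omega))
        intro v hv
        exact hp v (Finset.mem_filter.1 hv).2
      have hB : d - r + 1 < (univ.filter fun v => w v < 0).card := by
        by_contra h
        refine pos_support_not_face pos Δ hb (fun v => - w v) (by simp [h0]) (by simp [h1])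
          (by simpa using hne) (hF₂ _ ?_ ?_)
        · intro v hv
          exact hm v (by simpa using hv)
        · simpa using (by omega : (univ.filter fun v => w v < 0).card ≤ d - r + 1)
      have hd : Disjoint (univ.filter fun v => 0 < w v) (univ.filter fun v => w v < 0) := by
        rw [Finset.disjoint_filter]
        intro v _ h
        linarith
      have hu := Finset.card_union_of_disjoint hd
      have hsub : (univ.filter fun v => 0 < w v) ∪ (univ.filter fun v => w v < 0) ⊆
          (univ.filter fun v => w v ≠ 0) := by
        intro v hv
        simp only [Finset.mem_union, Finset.mem_filter, Finset.mem_univ, true_and] at hv ⊢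
        rcases hv with h | h
        · exact h.ne'
        · exact h.ne
      have := Finset.card_le_card hsub
      omega

/-- Points of the convex hull of finitely many vertices, as convex combinations. -/
theorem hull_weights {V : Type*} [Fintype V] [DecidableEq V] {d : ℕ}
    (pos : V → EuclideanSpace ℝ (Fin d)) (hinj : Function.Injective pos) (F : Finset V)
    (x : EuclideanSpace ℝ (Fin d)) (hx : x ∈ convexHull ℝ (pos '' ↑F)) :
    ∃ w : V → ℝ, (∀ v, 0 ≤ w v) ∧ (∀ v, v ∉ F → w v = 0) ∧ ∑ v, w v = 1 ∧
      ∑ v, w v • pos v = x := by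
  rw [← Finset.coe_image, Finset.mem_convexHull'] at hx
  obtain ⟨f, hf, h1, hs⟩ := hx
  rw [Finset.sum_image hinj.injOn] at h1 hs
  refine ⟨fun v => if v ∈ F then f (pos v) else 0, ?_, ?_, ?_, ?_⟩
  · intro v
    by_cases h : v ∈ F
    · simpa [h] using hf _ (Finset.mem_image_of_mem _ h)
    · simp [h]
  · intro v h
    simp [h]
  · rw [← Finset.sum_filter, Finset.filter_mem_eq_inter, Finset.univ_inter]; exact h1
  · simp only [ite_smul, zero_smul]
    rw [← Finset.sum_filter, Finset.filter_mem_eq_inter, Finset.univ_inter]; exact hs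

/-- Let `Δ` be the boundary complex of a simplicial
`d`-polytope `P` with vertices `pos v ∈ ℝ^d`, let `1 ≤ r ≤ d/2`, and suppose
`h_{r-1}(P) = h_r(P)` (so that, as may be assumed, `Δ(r-1) = Δ(d-r)` and
`Δ' := Δ(r-1)` is pure of dimension `d`). Then for any two faces `F₁, F₂`
of `Δ'` one has `conv(F₁) ∩ conv(F₂) = conv(F₁ ∩ F₂)`, and every face `F`
of `Δ'` spans a simplex of dimension `#F - 1` (its vertices are affinely
independent); i.e., taking convex hulls of the faces of `Δ'` yields a
geometric realization of `Δ'`. -/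
theorem skc_geometric_realization
    {V : Type*} [Fintype V] [DecidableEq V] {d : ℕ} (r : ℕ)
    (hr1 : 1 ≤ r) (hr2 : 2 * r ≤ d)
    (pos : V → EuclideanSpace ℝ (Fin d)) (Δ : Set (Finset V))
    (hpoly : IsSimplicialPolytope pos Δ)
    (hh : hVec Δ d (r - 1) = hVec Δ d r)
    (heq : skc Δ (r - 1) = skc Δ (d - r))
    (hdim : ∀ F ∈ skc Δ (r - 1), F.card ≤ d + 1)
    (hpure : ∀ F ∈ skc Δ (r - 1), ∃ G ∈ skc Δ (r - 1), F ⊆ G ∧ G.card = d + 1) :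
    (∀ F₁ ∈ skc Δ (r - 1), ∀ F₂ ∈ skc Δ (r - 1),
      convexHull ℝ (pos '' ↑F₁) ∩ convexHull ℝ (pos '' ↑F₂)
        = convexHull ℝ (pos '' ↑(F₁ ∩ F₂))) ∧
    (∀ F ∈ skc Δ (r - 1),
      AffineIndependent ℝ (fun x : {x // x ∈ F} => pos x)) := by
  have hb := hpoly.1
  have hinj : Function.Injective pos := by
    intro u v huv
    by_contra hne
    exact hpoly.2.2.1 v (subset_convexHull ℝ _ ⟨u, hne, huv⟩)
  rw [heq]
  constructor
  · intro F₁ hF₁ F₂ hF₂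
    apply Set.Subset.antisymm
    · rintro x ⟨hx1, hx2⟩
      obtain ⟨a, ha, haF, has, hax⟩ := hull_weights pos hinj F₁ x hx1
      obtain ⟨b, hb', hbF, hbs, hbx⟩ := hull_weights pos hinj F₂ x hx2
      have hz := no_dependence r hr2 pos hinj Δ hb F₁ F₂ hF₁ hF₂ _ (fun v => a v - b v) le_rfl
        (by simp [has, hbs]) (by simp [sub_smul, hax, hbx])
        (by
          intro v hv
          by_contra h
          have h1 := haF v h
          have h2 := hb' v
          linarith)
        (by
          intro v hv
          by_contra h
          have h1 := hbF v h
          have h2 := ha v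
          linarith)
      have hout : ∀ v, v ∉ F₁ ∩ F₂ → a v = 0 := by
        intro v hv
        by_cases h : v ∈ F₁
        · have h2 : v ∉ F₂ := fun h2 => hv (Finset.mem_inter.2 ⟨h, h2⟩)
          have h3 := hz v
          have h4 := hbF v h2
          linarith
        · exact haF v h
      have e1 : ∑ v ∈ F₁ ∩ F₂, a v = 1 := by
        rw [← has]
        exact Finset.sum_subset (Finset.subset_univ _) (fun v _ hv => hout v hv)
      have e2 : ∑ v ∈ F₁ ∩ F₂, a v • pos v = x := by
        rw [← hax]
        exact Finset.sum_subset (Finset.subset_univ _) (fun v _ hv => by simp [hout v hv])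
      rw [← e2]
      exact (convex_convexHull ℝ _).sum_mem (fun v _ => ha v) e1
        (fun v hv => subset_convexHull ℝ _ ⟨v, hv, rfl⟩)
    · apply Set.subset_inter
      · apply convexHull_mono
        apply Set.image_mono
        exact_mod_cast Finset.inter_subset_left
      · apply convexHull_mono
        apply Set.image_mono
        exact_mod_cast Finset.inter_subset_right
  · intro F hF
    rw [affineIndependent_iff]
    intro s w h0 h1 i hi
    let u : V → ℝ := fun v => if h : v ∈ F then (if (⟨v, h⟩ : {x // x ∈ F}) ∈ s then w ⟨v, h⟩ else 0) else 0
    have hui : ∀ j : {x // x ∈ F}, u j = if j ∈ s then w j else 0 := by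
      rintro ⟨j, hj⟩
      simp [u, hj]
    have huo : ∀ v, v ∉ F → u v = 0 := fun v h => by simp [u, h]
    have s0 : ∑ v, u v = 0 := by
      rw [← h0, ← Finset.sum_subset (Finset.subset_univ F) (fun v _ hv => huo v hv),
        ← Finset.sum_coe_sort F]
      simp only [hui]
      rw [← Finset.sum_filter, Finset.filter_mem_eq_inter, Finset.univ_inter]
    have s1 : ∑ v, u v • pos v = 0 := by
      rw [← h1, ← Finset.sum_subset (Finset.subset_univ F) (fun v _ hv => by simp [huo v hv]),
        ← Finset.sum_coe_sort F]
      simp only [hui, ite_smul, zero_smul]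
      rw [← Finset.sum_filter, Finset.filter_mem_eq_inter, Finset.univ_inter]
    have hmem : ∀ v, u v ≠ 0 → v ∈ F := fun v h => by
      by_contra h'
      exact h (huo v h')
    have hz := no_dependence r hr2 pos hinj Δ hb F F hF hF _ u le_rfl s0 s1
      (fun v h => hmem v h.ne') (fun v h => hmem v h.ne) i
    rw [hui] at hz
    simpa [hi] using hz
end

section
/- Suppose char(k) = 0, and let Δ be a homology (d−1)-sphere over k having the weak Lefschetz property. If h_{r−1}(Δ) = h_r(Δ) for some r ≤ d/2, then the simplicial complex Δ(r−1) is Cohen–Macaulay over k of dimension d. -/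
open Finset

variable {V : Type*} [DecidableEq V] [Fintype V]

/- ### Graded commutative algebra over polynomial rings, following the paper's
definitions of l.s.o.p., Krull dimension, regular sequences, Cohen–Macaulayness,
the weak Lefschetz property, Hilbert series and `h`-vectors. -/

section Ring

variable (𝕜 : Type*) [Field 𝕜] {σ : Type*} [Fintype σ] [DecidableEq σ]

open MvPolynomial

/-- The Stanley–Reisner ideal `I_Δ` of a complex `Δ` on the vertex set `σ`:
the ideal generated by the squarefree monomials `x_F` for non-faces `F`. -/
noncomputable def SRideal (Δ : Set (Finset σ)) : Ideal (MvPolynomial σ 𝕜) :=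
  Ideal.span {m | ∃ F : Finset σ, F ∉ Δ ∧ m = ∏ v ∈ F, MvPolynomial.X v}

/-- `idealLE I m` is `I_{≤ m}`, the ideal generated by the elements of `I`
of degree at most `m`. -/
noncomputable def idealLE (I : Ideal (MvPolynomial σ 𝕜)) (m : ℕ) :
    Ideal (MvPolynomial σ 𝕜) :=
  Ideal.span {f | f ∈ I ∧ f.totalDegree ≤ m}

/-- The degree-`i` graded piece of `S/I`: the image of the space of
homogeneous polynomials of degree `i` in the quotient. -/
noncomputable def quotPiece (I : Ideal (MvPolynomial σ 𝕜)) (i : ℕ) :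
    Submodule 𝕜 ((MvPolynomial σ 𝕜) ⧸ I) :=
  Submodule.map (Ideal.Quotient.mkₐ 𝕜 I).toLinearMap
    (MvPolynomial.homogeneousSubmodule σ 𝕜 i)

/-- The Hilbert function of `S/I`. -/
noncomputable def hilb (I : Ideal (MvPolynomial σ 𝕜)) (i : ℕ) : ℕ :=
  Module.finrank 𝕜 (quotPiece 𝕜 I i)

/-- `θ` is a linear system of parameters for `S/I`: a sequence of linear
forms such that `S/(I + (θ))` is a finite dimensional `𝕜`-vector space. -/
def IsLsop (I : Ideal (MvPolynomial σ 𝕜)) {m : ℕ}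
    (θ : Fin m → MvPolynomial σ 𝕜) : Prop :=
  (∀ i, θ i ∈ MvPolynomial.homogeneousSubmodule σ 𝕜 1) ∧
    FiniteDimensional 𝕜
      ((MvPolynomial σ 𝕜) ⧸ (I ⊔ Ideal.span (Set.range θ)))

/-- The Krull dimension of `S/I`, defined (as in the paper) as the minimal
length of a linear system of parameters. -/
noncomputable def ringDim (I : Ideal (MvPolynomial σ 𝕜)) : ℕ :=
  sInf {m | ∃ θ : Fin m → MvPolynomial σ 𝕜, IsLsop 𝕜 I θ}

/-- `θ` is a regular sequence on `S/I`: each `θ i` is a nonzerodivisor on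
`S/(I + (θ_0, …, θ_{i-1}))`. -/
def IsRegSeq (I : Ideal (MvPolynomial σ 𝕜)) {m : ℕ}
    (θ : Fin m → MvPolynomial σ 𝕜) : Prop :=
  ∀ i : Fin m, ∀ g : MvPolynomial σ 𝕜,
    θ i * g ∈ I ⊔ Ideal.span (θ '' {j | j < i}) →
      g ∈ I ⊔ Ideal.span (θ '' {j | j < i})

/-- `S/I` is Cohen–Macaulay of Krull dimension `d`: the dimension is `d`,
and every l.s.o.p. is a regular sequence. -/
def IsCMdim (I : Ideal (MvPolynomial σ 𝕜)) (d : ℕ) : Prop :=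
  ringDim 𝕜 I = d ∧
  ∀ θ : Fin d → MvPolynomial σ 𝕜, IsLsop 𝕜 I θ → IsRegSeq 𝕜 I θ

/-- An Artinian quotient `S/I` has the weak Lefschetz property: there is a
linear form `w` such that multiplication `×w : (S/I)_m → (S/I)_{m+1}` is
injective or surjective for every `m`. -/
def HasWLP0 (I : Ideal (MvPolynomial σ 𝕜)) : Prop :=
  ∃ w : MvPolynomial σ 𝕜, w ∈ MvPolynomial.homogeneousSubmodule σ 𝕜 1 ∧
    ∀ m : ℕ,
      (∀ f ∈ quotPiece 𝕜 I m, Ideal.Quotient.mk I w * f = 0 → f = 0) ∨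
      (∀ g ∈ quotPiece 𝕜 I (m+1), ∃ f ∈ quotPiece 𝕜 I m,
        Ideal.Quotient.mk I w * f = g)

/-- `S/I` has the weak Lefschetz property (in dimension `d`): it is
Cohen–Macaulay of dimension `d` and there is an l.s.o.p. `Θ` such that
`S/(I + (Θ))` has the (Artinian) weak Lefschetz property. -/
def HasWLP (I : Ideal (MvPolynomial σ 𝕜)) (d : ℕ) : Prop :=
  IsCMdim 𝕜 I d ∧
  ∃ θ : Fin d → MvPolynomial σ 𝕜, IsLsop 𝕜 I θ ∧
    HasWLP0 𝕜 (I ⊔ Ideal.span (Set.range θ))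

/-- `(h 0, h 1, …)` is the `h`-vector of `S/I` (where `d = dim S/I`), i.e.
`H(S/I, t)·(1-t)^d = ∑ᵢ hᵢ tⁱ` as formal power series, expressed by
comparing coefficients. -/
def HasHVector (I : Ideal (MvPolynomial σ 𝕜)) (d : ℕ) (h : ℕ → ℤ) : Prop :=
  ∀ m : ℕ, h m = ∑ j ∈ Finset.range (d + 1),
    if j ≤ m then (-1 : ℤ) ^ j * (d.choose j) * (hilb 𝕜 I (m - j)) else 0

/-- `I` is a homogeneous ideal. -/
def IsHomogIdeal (I : Ideal (MvPolynomial σ 𝕜)) : Prop :=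
  ∀ f ∈ I, ∀ i : ℕ, MvPolynomial.homogeneousComponent i f ∈ I

end Ring



set_option linter.unusedSectionVars false

section Graded
open MvPolynomial
variable {𝕜 : Type*} [Field 𝕜] {σ : Type*} [Fintype σ] [DecidableEq σ]

instance finiteDim_homogSub (m : ℕ) : FiniteDimensional 𝕜 (homogeneousSubmodule σ 𝕜 m) :=
  Module.Finite.iff_fg.mpr (homogeneousSubmodule_fg σ 𝕜 m)

instance finiteDim_quotPiece (I : Ideal (MvPolynomial σ 𝕜)) (m : ℕ) :
    FiniteDimensional 𝕜 (quotPiece 𝕜 I m) := by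
  unfold quotPiece; infer_instance

section
attribute [local instance] MvPolynomial.gradedAlgebra

lemma isHomogIdeal_iff (I : Ideal (MvPolynomial σ 𝕜)) :
    IsHomogIdeal 𝕜 I ↔ I.IsHomogeneous (homogeneousSubmodule σ 𝕜) := by
  constructor
  · intro h i f hf
    have h2 : ((DirectSum.decompose (homogeneousSubmodule σ 𝕜) f i : MvPolynomial σ 𝕜)) =
        homogeneousComponent i f := decomposition.decompose'_apply f i
    rw [h2]
    exact h f hf i
  · intro h f hf i
    exact homogeneousComponent_mem_of_mem h hf i

lemma isHomogIdeal_span (s : Set (MvPolynomial σ 𝕜))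
    (h : ∀ f ∈ s, ∃ m, f.IsHomogeneous m) : IsHomogIdeal 𝕜 (Ideal.span s) := by
  rw [isHomogIdeal_iff]
  exact Ideal.homogeneous_span _ _ (fun f hf => by
    obtain ⟨m, hm⟩ := h f hf
    exact ⟨m, hm⟩)

lemma IsHomogIdeal.sup {I J : Ideal (MvPolynomial σ 𝕜)} (hI : IsHomogIdeal 𝕜 I)
    (hJ : IsHomogIdeal 𝕜 J) : IsHomogIdeal 𝕜 (I ⊔ J) := by
  rw [isHomogIdeal_iff] at *
  exact hI.sup hJ
end

lemma homComp_mul {y : MvPolynomial σ 𝕜} {a : ℕ} (hy : y.IsHomogeneous a)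
    (g : MvPolynomial σ 𝕜) (m : ℕ) :
    homogeneousComponent (m + a) (y * g) = y * homogeneousComponent m g := by
  have key : ∀ i, homogeneousComponent (m + a) (y * homogeneousComponent i g) =
      if i = m then y * homogeneousComponent i g else 0 := by
    intro i
    have h1 : (y * homogeneousComponent i g).IsHomogeneous (a + i) :=
      hy.mul (homogeneousComponent_isHomogeneous i g)
    rw [homogeneousComponent_of_mem h1]
    by_cases h : i = m
    · simp [h, add_comm]
    · rw [if_neg h, if_neg (by omega)]
  conv_lhs => rw [← sum_homogeneousComponent g, Finset.mul_sum, map_sum]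
  simp_rw [key]
  rw [Finset.sum_ite_eq']
  split_ifs with h
  · rfl
  · rw [homogeneousComponent_eq_zero m g (by simpa using h), mul_zero]

lemma homComp_zero_mul {y : MvPolynomial σ 𝕜} (hy : y.IsHomogeneous 1)
    (g : MvPolynomial σ 𝕜) :
    homogeneousComponent 0 (y * g) = 0 := by
  have : coeff 0 y = 0 := hy.coeff_eq_zero (by simp)
  rw [homogeneousComponent_zero]
  rw [← constantCoeff_eq] at this ⊢
  simp [this]

lemma mem_quotPiece {I : Ideal (MvPolynomial σ 𝕜)} {m : ℕ} {f : MvPolynomial σ 𝕜 ⧸ I} :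
    f ∈ quotPiece 𝕜 I m ↔ ∃ g : MvPolynomial σ 𝕜, g.IsHomogeneous m ∧ Ideal.Quotient.mk I g = f := by
  simp [quotPiece, Submodule.mem_map, mem_homogeneousSubmodule]

/-- kernel dimension of multiplication by `y` in degree `m` -/
noncomputable def kdim (I : Ideal (MvPolynomial σ 𝕜)) (y : MvPolynomial σ 𝕜) (m : ℕ) : ℕ :=
  Module.finrank 𝕜 (LinearMap.ker
    ((LinearMap.mulLeft 𝕜 (Ideal.Quotient.mk I y)).domRestrict (quotPiece 𝕜 I m)))

lemma kdim_eq_zero_iff (I : Ideal (MvPolynomial σ 𝕜)) (y : MvPolynomial σ 𝕜) (m : ℕ) :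
    kdim I y m = 0 ↔ ∀ g : MvPolynomial σ 𝕜, g.IsHomogeneous m → y * g ∈ I → g ∈ I := by
  unfold kdim
  rw [Submodule.finrank_eq_zero, LinearMap.ker_eq_bot']
  constructor
  · intro h g hg hy
    have := h ⟨Ideal.Quotient.mk I g, mem_quotPiece.mpr ⟨g, hg, rfl⟩⟩ (by
      simp only [LinearMap.domRestrict_apply, LinearMap.mulLeft_apply]
      rw [← map_mul]
      exact Ideal.Quotient.eq_zero_iff_mem.mpr hy)
    exact Ideal.Quotient.eq_zero_iff_mem.mp (congrArg Subtype.val this)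
  · rintro h ⟨f, hf⟩ h0
    obtain ⟨g, hg, rfl⟩ := mem_quotPiece.mp hf
    simp only [LinearMap.domRestrict_apply, LinearMap.mulLeft_apply] at h0
    rw [← map_mul] at h0
    have := h g hg (Ideal.Quotient.eq_zero_iff_mem.mp h0)
    exact Subtype.ext (Ideal.Quotient.eq_zero_iff_mem.mpr this)

lemma mem_sup_span_singleton' {I : Ideal (MvPolynomial σ 𝕜)} {y f : MvPolynomial σ 𝕜} :
    f ∈ I ⊔ Ideal.span {y} ↔ ∃ a ∈ I, ∃ g, f = a + y * g := by
  rw [Submodule.mem_sup]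
  constructor
  · rintro ⟨a, ha, b, hb, rfl⟩
    obtain ⟨g, rfl⟩ := Ideal.mem_span_singleton'.mp hb
    exact ⟨a, ha, g, by ring⟩
  · rintro ⟨a, ha, g, rfl⟩
    exact ⟨a, ha, y * g, Ideal.mem_span_singleton'.mpr ⟨g, by ring⟩, rfl⟩

lemma hilb_step {I : Ideal (MvPolynomial σ 𝕜)} (hI : IsHomogIdeal 𝕜 I)
    {y : MvPolynomial σ 𝕜} (hy : y.IsHomogeneous 1) (m : ℕ) :
    hilb 𝕜 (I ⊔ Ideal.span {y}) (m + 1) + hilb 𝕜 I m = hilb 𝕜 I (m + 1) + kdim I y m := by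
  set J := I ⊔ Ideal.span {y} with hJ
  have hIJ : I ≤ J := le_sup_left
  let μ := (LinearMap.mulLeft 𝕜 (Ideal.Quotient.mk I y)).domRestrict (quotPiece 𝕜 I m)
  let π0 : (MvPolynomial σ 𝕜 ⧸ I) →ₗ[𝕜] (MvPolynomial σ 𝕜 ⧸ J) :=
    (Ideal.Quotient.factorₐ 𝕜 hIJ).toLinearMap
  let π := π0.domRestrict (quotPiece 𝕜 I (m+1))
  have hπ0 : ∀ g, π0 (Ideal.Quotient.mk I g) = Ideal.Quotient.mk J g := fun g => rfl
  have h1 := LinearMap.finrank_range_add_finrank_ker μ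
  have h2 := LinearMap.finrank_range_add_finrank_ker π
  have h3 : LinearMap.range π = quotPiece 𝕜 J (m+1) := by
    ext f
    simp only [LinearMap.mem_range]
    rw [mem_quotPiece]
    constructor
    · rintro ⟨⟨x, hx⟩, rfl⟩
      obtain ⟨g, hg, rfl⟩ := mem_quotPiece.mp hx
      exact ⟨g, hg, rfl⟩
    · rintro ⟨g, hg, rfl⟩
      exact ⟨⟨Ideal.Quotient.mk I g, mem_quotPiece.mpr ⟨g, hg, rfl⟩⟩, rfl⟩
  have h4 : (LinearMap.ker π).map (quotPiece 𝕜 I (m+1)).subtype = LinearMap.range μ := by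
    ext f
    simp only [Submodule.mem_map, LinearMap.mem_ker, LinearMap.mem_range]
    constructor
    · rintro ⟨⟨x, hx⟩, h0, rfl⟩
      obtain ⟨g, hg, rfl⟩ := mem_quotPiece.mp hx
      have h0' : Ideal.Quotient.mk J g = 0 := h0
      rw [Ideal.Quotient.eq_zero_iff_mem, hJ, mem_sup_span_singleton'] at h0'
      obtain ⟨a, ha, b, hab⟩ := h0'
      have : g = homogeneousComponent (m+1) a + y * homogeneousComponent m b := by
        rw [← homComp_mul hy, ← map_add, ← hab, homogeneousComponent_eq_self hg]
      refine ⟨⟨Ideal.Quotient.mk I (homogeneousComponent m b),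
        mem_quotPiece.mpr ⟨_, homogeneousComponent_isHomogeneous _ _, rfl⟩⟩, ?_⟩
      show Ideal.Quotient.mk I y * Ideal.Quotient.mk I _ = Ideal.Quotient.mk I g
      rw [← map_mul, this, map_add, Ideal.Quotient.eq_zero_iff_mem.mpr (hI a ha (m+1)), zero_add]
    · rintro ⟨⟨x, hx⟩, rfl⟩
      obtain ⟨g, hg, rfl⟩ := mem_quotPiece.mp hx
      refine ⟨⟨Ideal.Quotient.mk I (y * g), mem_quotPiece.mpr ⟨_, by
        simpa [add_comm] using hy.mul hg, rfl⟩⟩, ?_, ?_⟩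
      · show Ideal.Quotient.mk J (y * g) = 0
        rw [Ideal.Quotient.eq_zero_iff_mem, hJ, mem_sup_span_singleton']
        exact ⟨0, I.zero_mem, g, by ring⟩
      · show Ideal.Quotient.mk I (y * g) = Ideal.Quotient.mk I y * Ideal.Quotient.mk I g
        rw [map_mul]
  have h5 : Module.finrank 𝕜 (LinearMap.ker π) = Module.finrank 𝕜 (LinearMap.range μ) := by
    rw [← h4]
    exact (LinearEquiv.finrank_eq (Submodule.equivMapOfInjective _
      (Submodule.injective_subtype _) _))
  rw [h3, h5] at h2
  unfold hilb kdim
  change _ + Module.finrank 𝕜 (quotPiece 𝕜 I m) = _ + Module.finrank 𝕜 (LinearMap.ker μ)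
  omega

lemma hilb_eq_zero_iff (I : Ideal (MvPolynomial σ 𝕜)) (m : ℕ) :
    hilb 𝕜 I m = 0 ↔ ∀ g : MvPolynomial σ 𝕜, g.IsHomogeneous m → g ∈ I := by
  unfold hilb
  rw [Submodule.finrank_eq_zero, Submodule.eq_bot_iff]
  constructor
  · intro h g hg
    exact Ideal.Quotient.eq_zero_iff_mem.mp (h _ (mem_quotPiece.mpr ⟨g, hg, rfl⟩))
  · intro h x hx
    obtain ⟨g, hg, rfl⟩ := mem_quotPiece.mp hx
    exact Ideal.Quotient.eq_zero_iff_mem.mpr (h g hg)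

/-- The Hilbert function only depends on the degree `m` part. -/
lemma hilb_congr {I J : Ideal (MvPolynomial σ 𝕜)} {m : ℕ}
    (h : ∀ g : MvPolynomial σ 𝕜, g.IsHomogeneous m → (g ∈ I ↔ g ∈ J)) :
    hilb 𝕜 I m = hilb 𝕜 J m := by
  have key : ∀ K : Ideal (MvPolynomial σ 𝕜), hilb 𝕜 K m + Module.finrank 𝕜
      (LinearMap.ker ((Ideal.Quotient.mkₐ 𝕜 K).toLinearMap.domRestrict
        (homogeneousSubmodule σ 𝕜 m))) = Module.finrank 𝕜 (homogeneousSubmodule σ 𝕜 m) := by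
    intro K
    rw [← LinearMap.finrank_range_add_finrank_ker
      ((Ideal.Quotient.mkₐ 𝕜 K).toLinearMap.domRestrict (homogeneousSubmodule σ 𝕜 m))]
    rw [LinearMap.range_domRestrict]
    rfl
  have hk : LinearMap.ker ((Ideal.Quotient.mkₐ 𝕜 I).toLinearMap.domRestrict
        (homogeneousSubmodule σ 𝕜 m)) = LinearMap.ker ((Ideal.Quotient.mkₐ 𝕜 J).toLinearMap.domRestrict
        (homogeneousSubmodule σ 𝕜 m)) := by
    ext ⟨g, hg⟩
    simp only [LinearMap.mem_ker, LinearMap.domRestrict_apply, AlgHom.toLinearMap_apply,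
      Ideal.Quotient.mkₐ_eq_mk, Ideal.Quotient.eq_zero_iff_mem]
    exact h g hg
  have h1 := key I
  have h2 := key J
  rw [hk] at h1
  omega

lemma hilb_sup_zero {I : Ideal (MvPolynomial σ 𝕜)} (hI : IsHomogIdeal 𝕜 I)
    {y : MvPolynomial σ 𝕜} (hy : y.IsHomogeneous 1) :
    hilb 𝕜 (I ⊔ Ideal.span {y}) 0 = hilb 𝕜 I 0 := by
  apply hilb_congr
  intro g hg
  constructor
  · intro h
    obtain ⟨a, ha, b, hab⟩ := mem_sup_span_singleton'.mp h
    have : g = homogeneousComponent 0 a := by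
      rw [← homogeneousComponent_eq_self hg, hab, map_add, homComp_zero_mul hy, add_zero]
    rw [this]; exact hI a ha 0
  · intro h; exact Ideal.mem_sup_left h

/-- Hilbert series -/
noncomputable def HS (I : Ideal (MvPolynomial σ 𝕜)) : PowerSeries ℤ :=
  PowerSeries.mk (fun m => (hilb 𝕜 I m : ℤ))

noncomputable def KS (I : Ideal (MvPolynomial σ 𝕜)) (y : MvPolynomial σ 𝕜) : PowerSeries ℤ :=
  PowerSeries.mk (fun m => (kdim I y m : ℤ))

lemma HS_step {I : Ideal (MvPolynomial σ 𝕜)} (hI : IsHomogIdeal 𝕜 I)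
    {y : MvPolynomial σ 𝕜} (hy : y.IsHomogeneous 1) :
    HS (I ⊔ Ideal.span {y}) = (1 - PowerSeries.X) * HS I + PowerSeries.X * KS I y := by
  ext m
  rcases m with _ | m
  · simp [HS, KS, sub_mul, hilb_sup_zero hI hy]
  · have := hilb_step hI hy m
    simp only [HS, KS, sub_mul, one_mul, map_add, map_sub, PowerSeries.coeff_mk,
      PowerSeries.coeff_succ_X_mul]
    zify at this
    linarith

lemma coeff_one_sub_pow_mul_of_lt {f : PowerSeries ℤ} {m : ℕ} (k : ℕ)
    (h : ∀ i < m, PowerSeries.coeff i f = 0) :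
    (∀ i < m, PowerSeries.coeff i ((1 - PowerSeries.X) ^ k * f) = 0) ∧
    PowerSeries.coeff m ((1 - PowerSeries.X) ^ k * f) = PowerSeries.coeff m f := by
  induction k with
  | zero => simpa using h
  | succ k ih =>
    obtain ⟨ih1, ih2⟩ := ih
    rw [pow_succ', mul_assoc]
    constructor
    · intro i hi
      rw [sub_mul, one_mul, map_sub, ih1 i hi]
      rcases i with _ | i
      · simp
      · rw [PowerSeries.coeff_succ_X_mul, ih1 i (by omega)]; simp
    · rw [sub_mul, one_mul, map_sub, ih2]
      rcases m with _ | m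
      · simp
      · rw [PowerSeries.coeff_succ_X_mul, ih1 m (by omega)]; simp

/-- positivity: a sum of nonnegative series times powers of `1 - X` vanishes only trivially -/
lemma nonneg_sum_eq_zero {ι : Type*} (s : Finset ι) (D : ι → PowerSeries ℤ) (e : ι → ℕ)
    (hD : ∀ i ∈ s, ∀ m, 0 ≤ PowerSeries.coeff m (D i))
    (h : ∑ i ∈ s, (1 - PowerSeries.X) ^ (e i) * D i = 0) :
    ∀ i ∈ s, D i = 0 := by
  have key : ∀ m, ∀ i ∈ s, PowerSeries.coeff m (D i) = 0 := by
    intro m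
    induction m using Nat.strong_induction_on with
    | _ m ih =>
      have h0 := congrArg (PowerSeries.coeff m) h
      rw [map_sum, map_zero] at h0
      have h1 : ∑ i ∈ s, PowerSeries.coeff m (D i) = 0 := by
        rw [← h0]
        refine Finset.sum_congr rfl (fun i hi => ?_)
        exact ((coeff_one_sub_pow_mul_of_lt (e i) (fun j hj => ih j hj i hi)).2).symm
      exact (Finset.sum_eq_zero_iff_of_nonneg (fun i hi => hD i hi m)).mp h1
  intro i hi
  ext m
  simpa using key m i hi

/-- partial ideals -/
noncomputable def partI (I : Ideal (MvPolynomial σ 𝕜)) {n : ℕ} (θ : Fin n → MvPolynomial σ 𝕜) (i : ℕ) :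
    Ideal (MvPolynomial σ 𝕜) := I ⊔ Ideal.span (θ '' {j | j.val < i})

lemma partI_zero (I : Ideal (MvPolynomial σ 𝕜)) {n : ℕ} (θ : Fin n → MvPolynomial σ 𝕜) :
    partI I θ 0 = I := by simp [partI]

lemma partI_last (I : Ideal (MvPolynomial σ 𝕜)) {n : ℕ} (θ : Fin n → MvPolynomial σ 𝕜) :
    partI I θ n = I ⊔ Ideal.span (Set.range θ) := by
  simp [partI]

lemma partI_succ (I : Ideal (MvPolynomial σ 𝕜)) {n : ℕ} (θ : Fin n → MvPolynomial σ 𝕜)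
    (i : Fin n) : partI I θ (i + 1) = partI I θ i ⊔ Ideal.span {θ i} := by
  have : ({j | j.val < i.val + 1} : Set (Fin n)) = {j | j.val < i.val} ∪ {i} := by
    ext j; simp only [Set.mem_ofPred_eq, Set.mem_union, Set.mem_singleton_iff, Fin.ext_iff]; omega
  rw [partI, this, Set.image_union, Set.image_singleton, Ideal.span_union, partI, sup_assoc]

lemma isHomog_linspan (s : Set (MvPolynomial σ 𝕜)) (h : ∀ f ∈ s, f.IsHomogeneous 1)
    {I : Ideal (MvPolynomial σ 𝕜)} (hI : IsHomogIdeal 𝕜 I) :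
    IsHomogIdeal 𝕜 (I ⊔ Ideal.span s) :=
  hI.sup (isHomogIdeal_span s (fun f hf => ⟨1, h f hf⟩))

lemma partI_homog {I : Ideal (MvPolynomial σ 𝕜)} (hI : IsHomogIdeal 𝕜 I)
    {n : ℕ} {θ : Fin n → MvPolynomial σ 𝕜} (hθ : ∀ i, (θ i).IsHomogeneous 1) (i : ℕ) :
    IsHomogIdeal 𝕜 (partI I θ i) :=
  isHomog_linspan _ (by rintro f ⟨j, _, rfl⟩; exact hθ j) hI

lemma HS_seq {I : Ideal (MvPolynomial σ 𝕜)} (hI : IsHomogIdeal 𝕜 I)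
    {n : ℕ} {θ : Fin n → MvPolynomial σ 𝕜} (hθ : ∀ i, (θ i).IsHomogeneous 1) (m : ℕ) (hm : m ≤ n) :
    HS (partI I θ m) = (1 - PowerSeries.X) ^ m * HS I + PowerSeries.X *
      ∑ i : Fin n, if i.val < m then (1 - PowerSeries.X) ^ (m - 1 - i.val) * KS (partI I θ i) (θ i) else 0 := by
  induction m with
  | zero => simp [partI_zero]
  | succ m ih =>
    have ih := ih (by omega)
    have h1 := partI_succ I θ ⟨m, hm⟩
    simp only at h1
    rw [h1, HS_step (partI_homog hI hθ m) (hθ _), ih]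
    have h2 : (∑ i : Fin n, if i.val < m + 1 then (1 - PowerSeries.X : PowerSeries ℤ) ^ (m + 1 - 1 - i.val)
        * KS (partI I θ i) (θ i) else 0) = (1 - PowerSeries.X) * (∑ i : Fin n, if i.val < m then
        (1 - PowerSeries.X) ^ (m - 1 - i.val) * KS (partI I θ i) (θ i) else 0)
        + KS (partI I θ m) (θ ⟨m, hm⟩) := by
      have h3 : KS (partI I θ m) (θ ⟨m, hm⟩) = ∑ i : Fin n, if i = ⟨m, hm⟩ then
        KS (partI I θ i) (θ i) else 0 := by simp
      rw [h3, Finset.mul_sum, ← Finset.sum_add_distrib]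
      refine Finset.sum_congr rfl (fun i _ => ?_)
      rcases lt_trichotomy i.val m with h | h | h
      · rw [if_pos (by omega), if_pos h, if_neg (by rw [Fin.ext_iff]; simp; omega), add_zero,
          ← mul_assoc, ← pow_succ']
        congr 2; omega
      · rw [if_pos (by omega), if_neg (by omega), if_pos (by rw [Fin.ext_iff]; simpa using h)]
        simp [h]
      · rw [if_neg (by omega), if_neg (by omega), if_neg (by rw [Fin.ext_iff]; simp; omega)]
        simp
    rw [h2]
    ring

/-- nonzerodivisor reduction to homogeneous elements -/
lemma nzd_of_kdim {I : Ideal (MvPolynomial σ 𝕜)} (hI : IsHomogIdeal 𝕜 I)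
    {y : MvPolynomial σ 𝕜} (hy : y.IsHomogeneous 1) (h : ∀ m, kdim I y m = 0)
    (g : MvPolynomial σ 𝕜) (hg : y * g ∈ I) : g ∈ I := by
  rw [← sum_homogeneousComponent g]
  refine Ideal.sum_mem _ (fun m _ => ?_)
  refine (kdim_eq_zero_iff I y m).mp (h m) _ (homogeneousComponent_isHomogeneous _ _) ?_
  rw [← homComp_mul hy]
  exact hI _ hg _

lemma KS_eq_zero_iff {I : Ideal (MvPolynomial σ 𝕜)} {y : MvPolynomial σ 𝕜} :
    KS I y = 0 ↔ ∀ m, kdim I y m = 0 := by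
  constructor
  · intro h m
    have := congrArg (PowerSeries.coeff m) h
    simpa [KS] using this
  · intro h; ext m; simp [KS, h]

lemma KS_nonneg (I : Ideal (MvPolynomial σ 𝕜)) (y : MvPolynomial σ 𝕜) (m : ℕ) :
    0 ≤ PowerSeries.coeff m (KS I y) := by simp [KS]

/-- Hilbert series form of regularity -/
def HReg (I : Ideal (MvPolynomial σ 𝕜)) {n : ℕ} (θ : Fin n → MvPolynomial σ 𝕜) : Prop :=
  HS (I ⊔ Ideal.span (Set.range θ)) = (1 - PowerSeries.X) ^ n * HS I

lemma isRegSeq_iff_HReg {I : Ideal (MvPolynomial σ 𝕜)} (hI : IsHomogIdeal 𝕜 I)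
    {n : ℕ} {θ : Fin n → MvPolynomial σ 𝕜} (hθ : ∀ i, (θ i).IsHomogeneous 1) :
    IsRegSeq 𝕜 I θ ↔ HReg I θ := by
  have h := HS_seq hI hθ n le_rfl
  rw [partI_last] at h
  have hp : ∀ i : Fin n, I ⊔ Ideal.span (θ '' {j | j < i}) = partI I θ i := fun i => rfl
  unfold HReg
  rw [h]
  constructor
  · intro hr
    have : ∀ i : Fin n, KS (partI I θ i) (θ i) = 0 := by
      intro i
      rw [KS_eq_zero_iff]
      intro m
      rw [kdim_eq_zero_iff]
      intro g _ hg
      have := hr i g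
      rw [hp] at this
      exact this hg
    simp [this]
  · intro hs
    have hs' : PowerSeries.X * ∑ i : Fin n, (if i.val < n then
        (1 - PowerSeries.X) ^ (n - 1 - i.val) * KS (partI I θ i) (θ i) else 0) = 0 := by
      linear_combination hs
    rw [mul_eq_zero] at hs'
    have hs'' := hs'.resolve_left PowerSeries.X_ne_zero
    simp only [Fin.is_lt, if_true] at hs''
    have := nonneg_sum_eq_zero Finset.univ (fun i : Fin n => KS (partI I θ i) (θ i))
      (fun i => n - 1 - i.val) (fun i _ m => KS_nonneg _ _ _) hs''
    intro i g hg
    rw [hp] at *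
    exact nzd_of_kdim (partI_homog hI hθ _) (hθ i) (KS_eq_zero_iff.mp (this i (Finset.mem_univ _))) g hg

lemma range_succAbove_union {α : Type*} {n : ℕ} (θ : Fin (n+1) → α) (i : Fin (n+1)) :
    Set.range θ = Set.range (fun j => θ (i.succAbove j)) ∪ {θ i} := by
  ext x
  simp only [Set.mem_range, Set.mem_union, Set.mem_singleton_iff]
  constructor
  · rintro ⟨j, rfl⟩
    rcases eq_or_ne j i with rfl | h
    · right; rfl
    · left
      obtain ⟨k, rfl⟩ := Fin.exists_succAbove_eq h
      exact ⟨k, rfl⟩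
  · rintro (⟨j, rfl⟩ | rfl)
    · exact ⟨_, rfl⟩
    · exact ⟨_, rfl⟩

lemma HReg_succAbove {I : Ideal (MvPolynomial σ 𝕜)} (hI : IsHomogIdeal 𝕜 I)
    {n : ℕ} {θ : Fin (n+1) → MvPolynomial σ 𝕜} (hθ : ∀ i, (θ i).IsHomogeneous 1) (i : Fin (n+1)) :
    HReg I θ ↔ HReg I (fun j => θ (i.succAbove j)) ∧
      KS (I ⊔ Ideal.span (Set.range (fun j => θ (i.succAbove j)))) (θ i) = 0 := by
  have hθ' : ∀ j, (θ (i.succAbove j)).IsHomogeneous 1 := fun j => hθ _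
  set θ' := fun j => θ (i.succAbove j) with hdef
  set K := I ⊔ Ideal.span (Set.range θ') with hK
  have hKh : IsHomogIdeal 𝕜 K := isHomog_linspan _ (by rintro f ⟨j, rfl⟩; exact hθ' j) hI
  have e1 : I ⊔ Ideal.span (Set.range θ) = K ⊔ Ideal.span {θ i} := by
    rw [range_succAbove_union θ i, Ideal.span_union, ← sup_assoc]
  have h1 := HS_step hKh (hθ i)
  have h2 := HS_seq hI hθ' n le_rfl
  rw [partI_last, ← hK] at h2
  simp only [Fin.is_lt, if_true] at h2
  unfold HReg
  rw [e1, h1, ← hK]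
  constructor
  · intro h
    rw [h2] at h
    have hs' : PowerSeries.X * (∑ o : Option (Fin n), (1 - PowerSeries.X) ^
        (o.elim 0 (fun j => n - 1 - j.val + 1)) * (o.elim (KS K (θ i)) (fun j => KS (partI I θ' j) (θ' j)))) = 0 := by
      rw [Fintype.sum_option]
      simp only [Option.elim, pow_zero, one_mul, pow_succ', mul_assoc]
      rw [← Finset.mul_sum]
      rw [pow_succ'] at h
      linear_combination h
    rw [mul_eq_zero] at hs'
    have := nonneg_sum_eq_zero _ _ _ (by
      rintro (_ | j) _ m <;> exact KS_nonneg _ _ _) (hs'.resolve_left PowerSeries.X_ne_zero)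
    have a1 := this none (Finset.mem_univ _)
    have a2 : ∀ j : Fin n, KS (partI I θ' j) (θ' j) = 0 := fun j => this (some j) (Finset.mem_univ _)
    refine ⟨?_, a1⟩
    rw [h2]
    have : (∑ x : Fin n, (1 - PowerSeries.X : PowerSeries ℤ) ^ (n - 1 - x.val) *
      KS (partI I θ' x) (θ' x)) = 0 := by simp [a2]
    rw [this]; simp
  · rintro ⟨h, h0⟩
    rw [h, h0, pow_succ']
    ring

end Graded

set_option linter.unusedSectionVars false

section SR
open MvPolynomial
variable {𝕜 : Type*} [Field 𝕜] {σ : Type*} [Fintype σ] [DecidableEq σ]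

lemma prod_X_eq_monomial (F : Finset σ) :
    (∏ v ∈ F, X v : MvPolynomial σ 𝕜) = monomial (∑ v ∈ F, Finsupp.single v 1) 1 := by
  rw [monomial_sum_one]; rfl

lemma ind_apply (F : Finset σ) (u : σ) :
    (∑ v ∈ F, Finsupp.single v 1 : σ →₀ ℕ) u = if u ∈ F then 1 else 0 := by
  rw [Finsupp.finset_sum_apply]
  simp [Finsupp.single_apply]

lemma ind_le_iff (F : Finset σ) (a : σ →₀ ℕ) :
    (∑ v ∈ F, Finsupp.single v 1 : σ →₀ ℕ) ≤ a ↔ F ⊆ a.support := by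
  rw [Finsupp.le_def]
  constructor
  · intro h u hu
    have := h u
    rw [ind_apply, if_pos hu] at this
    rw [Finsupp.mem_support_iff]; omega
  · intro h u
    rw [ind_apply]
    split_ifs with hu
    · have := Finsupp.mem_support_iff.mp (h hu); omega
    · omega

lemma mem_SRideal {Δ : Set (Finset σ)} (hΔ : IsComplex Δ) (f : MvPolynomial σ 𝕜) :
    f ∈ SRideal 𝕜 Δ ↔ ∀ a ∈ f.support, a.support ∉ Δ := by
  have h1 : SRideal 𝕜 Δ = Ideal.span ((fun s => monomial s (1 : 𝕜)) ''
      {s | ∃ F : Finset σ, F ∉ Δ ∧ s = ∑ v ∈ F, Finsupp.single v 1}) := by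
    unfold SRideal
    congr 1
    ext m
    constructor
    · rintro ⟨F, hF, rfl⟩
      exact ⟨_, ⟨F, hF, rfl⟩, (prod_X_eq_monomial F).symm⟩
    · rintro ⟨s, ⟨F, hF, rfl⟩, rfl⟩
      exact ⟨F, hF, (prod_X_eq_monomial F).symm⟩
  rw [h1, mem_ideal_span_monomial_image]
  refine forall₂_congr (fun a _ => ?_)
  constructor
  · rintro ⟨s, ⟨F, hF, rfl⟩, hs⟩ h
    rw [ind_le_iff] at hs
    exact hF (hΔ _ h _ hs)
  · intro h
    exact ⟨_, ⟨a.support, h, rfl⟩, (ind_le_iff _ _).mpr subset_rfl⟩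

lemma SRideal_homog (Δ : Set (Finset σ)) : IsHomogIdeal 𝕜 (SRideal 𝕜 Δ) := by
  apply isHomogIdeal_span
  rintro f ⟨F, _, rfl⟩
  exact ⟨_, IsHomogeneous.prod F _ (fun _ => 1) (fun v _ => isHomogeneous_X 𝕜 v)⟩

open Classical in
lemma hilb_SR {Δ : Set (Finset σ)} (hΔ : IsComplex Δ) (m : ℕ) :
    hilb 𝕜 (SRideal 𝕜 Δ) m =
      (((univ : Finset σ).finsuppAntidiag m).filter (fun a => a.support ∈ Δ)).card := by
  set A := ((univ : Finset σ).finsuppAntidiag m).filter (fun a => a.support ∈ Δ) with hA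
  have hdeg : ∀ a : σ →₀ ℕ, a ∈ (univ : Finset σ).finsuppAntidiag m ↔ a.degree = m := by
    intro a
    rw [mem_finsuppAntidiag]
    simp [Finsupp.degree_eq_sum]
  let b : A → MvPolynomial σ 𝕜 ⧸ SRideal 𝕜 Δ := fun a =>
    Ideal.Quotient.mk _ (monomial a.1 1)
  have hli : LinearIndependent 𝕜 b := by
    rw [Fintype.linearIndependent_iff]
    intro c hc i
    by_contra hne
    have h1 : Ideal.Quotient.mk (SRideal 𝕜 Δ) (∑ a : A, monomial a.1 (c a)) = 0 := by
      rw [map_sum, ← hc]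
      refine Finset.sum_congr rfl (fun a _ => ?_)
      have : (monomial a.1 (c a) : MvPolynomial σ 𝕜) = c a • monomial a.1 1 := by
        rw [smul_monomial, smul_eq_mul, mul_one]
      rw [this]; rfl
    rw [Ideal.Quotient.eq_zero_iff_mem, mem_SRideal hΔ] at h1
    refine h1 i.1 ?_ (Finset.mem_filter.mp i.2).2
    rw [MvPolynomial.mem_support_iff, coeff_sum]
    simp only [coeff_monomial]
    rw [Finset.sum_eq_single i]
    · simpa using hne
    · intro j _ hj
      rw [if_neg]; intro h; exact hj (Subtype.ext h)
    · simp
  have hsp : Submodule.span 𝕜 (Set.range b) = quotPiece 𝕜 (SRideal 𝕜 Δ) m := by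
    apply le_antisymm
    · rw [Submodule.span_le]
      rintro _ ⟨a, rfl⟩
      refine mem_quotPiece.mpr ⟨_, ?_, rfl⟩
      exact isHomogeneous_monomial _ ((hdeg _).mp (Finset.mem_filter.mp a.2).1)
    · intro x hx
      obtain ⟨g, hg, rfl⟩ := mem_quotPiece.mp hx
      rw [g.as_sum, map_sum]
      refine Submodule.sum_mem _ (fun a ha => ?_)
      by_cases hs : a.support ∈ Δ
      · have haA : a ∈ A := by
          rw [hA, Finset.mem_filter, hdeg]
          refine ⟨?_, hs⟩
          by_contra h
          exact (MvPolynomial.mem_support_iff.mp ha) (hg.coeff_eq_zero h)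
        have : (monomial a (coeff a g) : MvPolynomial σ 𝕜) = coeff a g • monomial a 1 := by
          rw [smul_monomial, smul_eq_mul, mul_one]
        rw [this]
        have hb : b ⟨a, haA⟩ ∈ Submodule.span 𝕜 (Set.range b) :=
          Submodule.subset_span (Set.mem_range_self _)
        exact Submodule.smul_mem _ (coeff a g) hb
      · have : Ideal.Quotient.mk (SRideal 𝕜 Δ) (monomial a (coeff a g)) = 0 := by
          rw [Ideal.Quotient.eq_zero_iff_mem, mem_SRideal hΔ]
          intro c hc
          have := support_monomial_subset hc
          rw [Finset.mem_singleton] at this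
          rwa [this]
        rw [this]; exact Submodule.zero_mem _
  unfold hilb
  rw [← hsp, finrank_span_eq_card hli, Fintype.card_coe]

lemma coeff_X_mul_one (k : ℕ) : PowerSeries.coeff k
    ((PowerSeries.X : PowerSeries ℤ) * PowerSeries.mk 1) = if k = 0 then 0 else 1 := by
  rcases k with _ | k
  · simp
  · rw [PowerSeries.coeff_succ_X_mul]; simp

open Classical in
lemma HS_SR {Δ : Set (Finset σ)} (hΔ : IsComplex Δ) :
    HS (SRideal 𝕜 Δ) = ∑ F : Finset σ with F ∈ Δ,
      ((PowerSeries.X : PowerSeries ℤ) * PowerSeries.mk 1) ^ F.card := by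
  ext m
  rw [map_sum]
  simp only [HS, PowerSeries.coeff_mk]
  rw [hilb_SR hΔ, Finset.card_eq_sum_card_fiberwise (f := fun a => a.support)
    (t := (univ.filter (fun F : Finset σ => F ∈ Δ))) (fun a ha => by
      simpa using (Finset.mem_filter.mp ha).2)]
  push_cast
  refine Finset.sum_congr rfl (fun F hF => ?_)
  have hF' : F ∈ Δ := (Finset.mem_filter.mp hF).2
  rw [← Finset.prod_const, PowerSeries.coeff_prod]
  simp only [coeff_X_mul_one]
  have h1 : ∀ l ∈ F.finsuppAntidiag m, (∏ i ∈ F, if l i = 0 then (0:ℤ) else 1) =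
      if l.support = F then 1 else 0 := by
    intro l hl
    have hs := (mem_finsuppAntidiag.mp hl).2
    split_ifs with h
    · apply Finset.prod_eq_one
      intro i hi
      rw [← h] at hi
      rw [if_neg (Finsupp.mem_support_iff.mp hi)]
    · have : ∃ i ∈ F, l i = 0 := by
        by_contra hc
        push Not at hc
        exact h (Finset.Subset.antisymm hs (fun i hi => Finsupp.mem_support_iff.mpr (hc i hi)))
      obtain ⟨i, hi, h0⟩ := this
      exact Finset.prod_eq_zero hi (by simp [h0])
  rw [Finset.sum_congr rfl h1, Finset.sum_boole]
  congr 2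
  ext a
  simp only [Finset.mem_filter, mem_finsuppAntidiag]
  constructor
  · rintro ⟨⟨⟨h1, h2⟩, h3⟩, h4⟩
    refine ⟨⟨?_, h4.le⟩, h4⟩
    rw [← h1]
    exact Finset.sum_subset (Finset.subset_univ _) (fun i _ hi => by
      rw [← h4] at hi; simpa using hi)
  · rintro ⟨⟨h1, h2⟩, h4⟩
    refine ⟨⟨⟨?_, Finset.subset_univ _⟩, h4 ▸ hF'⟩, h4⟩
    rw [← h1]
    exact (Finset.sum_subset (Finset.subset_univ _) (fun i _ hi => by
      rw [← h4] at hi; simpa using hi)).symm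

open Classical in
lemma HS_SR_mul {Δ : Set (Finset σ)} (hΔ : IsComplex Δ) (d : ℕ) (hd : ∀ F ∈ Δ, F.card ≤ d) :
    (1 - PowerSeries.X) ^ d * HS (SRideal 𝕜 Δ) = ∑ F : Finset σ with F ∈ Δ,
      ((PowerSeries.X : PowerSeries ℤ) ^ F.card * (1 - PowerSeries.X) ^ (d - F.card)) := by
  rw [HS_SR hΔ, Finset.mul_sum]
  refine Finset.sum_congr rfl (fun F hF => ?_)
  have hF' := hd F (Finset.mem_filter.mp hF).2
  obtain ⟨e, rfl⟩ := Nat.exists_eq_add_of_le hF'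
  have h1 : (PowerSeries.mk 1 : PowerSeries ℤ) * (1 - PowerSeries.X) = 1 :=
    PowerSeries.mk_one_mul_one_sub_eq_one ℤ
  rw [Nat.add_sub_cancel_left, pow_add, mul_comm ((1 - PowerSeries.X) ^ F.card), mul_assoc,
    ← mul_pow, mul_comm]
  congr 2
  linear_combination PowerSeries.X * h1

lemma coeff_one_sub_X_pow' (k i : ℕ) : PowerSeries.coeff i
    ((1 - PowerSeries.X : PowerSeries ℤ) ^ k) = (-1) ^ i * (k.choose i) := by
  induction k generalizing i with
  | zero => 
    rcases i with _ | i
    · simp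
    · simp [PowerSeries.coeff_one]
  | succ k ih =>
    rw [pow_succ', sub_mul, one_mul, map_sub]
    rcases i with _ | i
    · simp
    · rw [PowerSeries.coeff_succ_X_mul, ih, ih, Nat.choose_succ_succ]
      push_cast; ring

open Classical in
lemma coeff_hVec (Δ : Set (Finset σ)) (d : ℕ) (i : ℕ) :
    PowerSeries.coeff i (∑ F : Finset σ with F ∈ Δ,
      ((PowerSeries.X : PowerSeries ℤ) ^ F.card * (1 - PowerSeries.X) ^ (d - F.card))) =
    hVec Δ d i := by
  rw [map_sum]
  unfold hVec
  have h0 : ∀ F : Finset σ, PowerSeries.coeff i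
      ((PowerSeries.X : PowerSeries ℤ) ^ F.card * (1 - PowerSeries.X) ^ (d - F.card)) =
      ∑ j ∈ Finset.range (i + 1), if F.card = j then
        (-1 : ℤ) ^ (i - j) * ((d - j).choose (i - j)) else 0 := by
    intro F
    rw [PowerSeries.coeff_X_pow_mul', Finset.sum_ite_eq]
    simp only [Finset.mem_range, Nat.lt_succ_iff, coeff_one_sub_X_pow']
  rw [Finset.sum_congr rfl (fun F _ => h0 F), Finset.sum_comm]
  refine Finset.sum_congr rfl (fun j _ => ?_)
  rw [← Finset.sum_filter, Finset.sum_const, nsmul_eq_mul, mul_comm]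
  congr 2
  unfold numFacesCard
  rw [Set.ncard_eq_toFinset_card']
  congr 1
  ext F
  simp

end SR

set_option linter.unusedSectionVars false

section Lsop
open MvPolynomial
variable {𝕜 : Type*} [Field 𝕜] {σ : Type*} [Fintype σ] [DecidableEq σ]

/-- linear form with given coefficients -/
noncomputable def linF : (σ → 𝕜) →ₗ[𝕜] MvPolynomial σ 𝕜 :=
  Fintype.linearCombination 𝕜 (fun u => (X u : MvPolynomial σ 𝕜))

lemma linF_apply (a : σ → 𝕜) : linF a = ∑ u, C (a u) * X u := by
  simp [linF, Fintype.linearCombination_apply, smul_eq_C_mul]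

lemma linF_single (u : σ) : linF (Pi.single u (1 : 𝕜)) = X u := by
  classical
  rw [linF, Fintype.linearCombination_apply_single, one_smul]

lemma linF_homog (a : σ → 𝕜) : (linF a).IsHomogeneous 1 := by
  rw [linF_apply]
  refine IsHomogeneous.sum _ _ _ (fun u _ => ?_)
  exact (isHomogeneous_X 𝕜 u).C_mul _

lemma exists_linF {z : MvPolynomial σ 𝕜} (hz : z.IsHomogeneous 1) : ∃ a, z = linF a := by
  have : z ∈ homogeneousSubmodule σ 𝕜 1 := hz
  rw [homogeneousSubmodule_one_eq_span_X] at this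
  rw [← Fintype.range_linearCombination] at this
  obtain ⟨a, ha⟩ := this
  exact ⟨a, ha.symm⟩

lemma eval_linF (a p : σ → 𝕜) : eval p (linF a) = ∑ u, a u * p u := by
  simp [linF_apply]

lemma eval_smul_lin {z : MvPolynomial σ 𝕜} (hz : z.IsHomogeneous 1) (t : 𝕜) (p : σ → 𝕜) :
    eval (t • p) z = t * eval p z := by
  obtain ⟨a, rfl⟩ := exists_linF hz
  rw [eval_linF, eval_linF, Finset.mul_sum]
  refine Finset.sum_congr rfl (fun u _ => ?_)
  simp; ring

lemma eval_add_lin {z : MvPolynomial σ 𝕜} (hz : z.IsHomogeneous 1) (p q : σ → 𝕜) :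
    eval (p + q) z = eval p z + eval q z := by
  obtain ⟨a, rfl⟩ := exists_linF hz
  simp only [eval_linF, ← Finset.sum_add_distrib]
  refine Finset.sum_congr rfl (fun u _ => ?_)
  simp; ring

def Spans (Δ : Set (Finset σ)) {n : ℕ} (θ : Fin n → MvPolynomial σ 𝕜) : Prop :=
  ∀ F ∈ Δ, ∀ p : σ → 𝕜, (∀ v ∉ F, p v = 0) → (∀ j, eval p (θ j) = 0) → p = 0

lemma lsop_spans [Infinite 𝕜] {Δ : Set (Finset σ)} (hΔ : IsComplex Δ) {n : ℕ}
    {θ : Fin n → MvPolynomial σ 𝕜} (h : IsLsop 𝕜 (SRideal 𝕜 Δ) θ) : Spans Δ θ := by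
  obtain ⟨hl, hf⟩ := h
  intro F hF p hp hθ
  by_contra hne
  obtain ⟨v, hv⟩ : ∃ v, p v ≠ 0 := by
    by_contra hc; push Not at hc; exact hne (funext hc)
  set J := SRideal 𝕜 Δ ⊔ Ideal.span (Set.range θ)
  have hker : ∀ t : 𝕜, ∀ f ∈ J, eval (t • p) f = 0 := by
    intro t f hfJ
    have : J ≤ RingHom.ker (eval (t • p)) := by
      refine sup_le ?_ ?_
      · unfold SRideal
        rw [Ideal.span_le]
        rintro _ ⟨G, hG, rfl⟩
        have : ∃ u ∈ G, u ∉ F := by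
          by_contra hc; push Not at hc
          exact hG (hΔ F hF G hc)
        obtain ⟨u, hu, huF⟩ := this
        change eval _ _ = 0
        rw [map_prod]
        refine Finset.prod_eq_zero hu ?_
        simp [hp u huF]
      · rw [Ideal.span_le]
        rintro _ ⟨j, rfl⟩
        change eval _ _ = 0
        rw [eval_smul_lin (hl j), hθ j, mul_zero]
    exact this hfJ
  have hIntg : IsIntegral 𝕜 (Ideal.Quotient.mk J (X v)) := IsIntegral.of_finite 𝕜 _
  obtain ⟨q, hq, hq0⟩ := hIntg
  have h1 : Polynomial.aeval (X v : MvPolynomial σ 𝕜) q ∈ J := by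
    rw [← Ideal.Quotient.eq_zero_iff_mem]
    rw [← hq0]
    have := Polynomial.map_aeval_eq_aeval_map (R := 𝕜) (S := MvPolynomial σ 𝕜) (T := 𝕜) (U := MvPolynomial σ 𝕜 ⧸ J)
      (φ := RingHom.id 𝕜) (ψ := Ideal.Quotient.mk J) (by ext; simp; rfl) q (X v)
    rw [this]; simp [Polynomial.aeval_def]
  have h2 : ∀ t : 𝕜, Polynomial.eval (t * p v) q = 0 := by
    intro t
    have := hker t _ h1
    rw [← coe_aeval_eq_eval] at this
    simp only [RingHom.coe_coe] at this
    rw [← Polynomial.aeval_algHom_apply] at this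
    simpa using this
  have h3 : q = 0 := by
    apply Polynomial.eq_zero_of_infinite_isRoot
    have : {x | q.IsRoot x} = Set.univ := by
      ext x
      simp only [Set.mem_ofPred_eq, Set.mem_univ, iff_true]
      have := h2 (x / p v)
      rwa [div_mul_cancel₀ _ hv] at this
    rw [this]; exact Set.infinite_univ
  rw [h3] at hq
  exact Polynomial.not_monic_zero hq

lemma spans_top {Δ : Set (Finset σ)} {n : ℕ} {a : Fin n → σ → 𝕜}
    (h : Spans Δ (fun j => linF (a j))) {F : Finset σ} (hF : F ∈ Δ)
    (W : Submodule 𝕜 (σ → 𝕜)) (h1 : ∀ j, a j ∈ W) (h2 : ∀ u ∉ F, Pi.single u 1 ∈ W) : W = ⊤ := by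
  by_contra hne
  obtain ⟨f, hf0, hf⟩ := Submodule.exists_le_ker_of_lt_top W (lt_top_iff_ne_top.mpr hne)
  have hfa : ∀ b : σ → 𝕜, f b = ∑ u, b u * f (Pi.single u 1) := by
    intro b
    conv_lhs => rw [pi_eq_sum_univ' b]
    rw [map_sum]
    refine Finset.sum_congr rfl (fun u _ => ?_)
    rw [map_smul, smul_eq_mul]
  have hp := h F hF (fun u => f (Pi.single u 1)) (fun u hu => hf (h2 u hu)) (fun j => by
    rw [eval_linF, ← hfa]; exact hf (h1 j))
  apply hf0
  ext b
  simp only [LinearMap.coe_comp, Function.comp_apply, LinearMap.zero_comp, LinearMap.zero_apply]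
  exact congrFun hp _

lemma exists_linFs {n : ℕ} {θ : Fin n → MvPolynomial σ 𝕜} (hθ : ∀ i, (θ i).IsHomogeneous 1) :
    ∃ a : Fin n → σ → 𝕜, θ = fun j => linF (a j) := by
  choose a ha using fun j => exists_linF (hθ j)
  exact ⟨a, funext ha⟩

lemma spans_card {Δ : Set (Finset σ)} {n : ℕ} {θ : Fin n → MvPolynomial σ 𝕜}
    (hθ : ∀ i, (θ i).IsHomogeneous 1)
    (h : Spans Δ θ) {F : Finset σ} (hF : F ∈ Δ) : F.card ≤ n := by
  obtain ⟨a, rfl⟩ := exists_linFs hθ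
  let ext : (F → 𝕜) →ₗ[𝕜] (σ → 𝕜) := 
    { toFun := fun p u => if hu : u ∈ F then p ⟨u, hu⟩ else 0
      map_add' := by intro p q; funext u; by_cases hu : u ∈ F <;> simp [hu]
      map_smul' := by intro p q; funext u; by_cases hu : u ∈ F <;> simp [hu] }
  let M : (F → 𝕜) →ₗ[𝕜] (Fin n → 𝕜) := (Matrix.mulVecLin (Matrix.of a)) ∘ₗ ext
  have hM : Function.Injective M := by
    rw [injective_iff_map_eq_zero]
    intro p hp
    have := h F hF (ext p) (fun v hv => by simp [ext, hv]) (fun j => by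
      rw [eval_linF]; exact congrFun hp j)
    funext u
    have := congrFun this u
    simpa [ext] using this
  have := LinearMap.finrank_le_finrank_of_injective hM
  simpa using this

lemma spans_mem {Δ : Set (Finset σ)} {n : ℕ} {θ : Fin n → MvPolynomial σ 𝕜}
    (hθ : ∀ i, (θ i).IsHomogeneous 1) (h : Spans Δ θ) (k : ℕ) :
    ∀ F : Finset σ, Fᶜ.card ≤ k → ∀ b : σ →₀ ℕ, k + 1 ≤ b.degree →
      (∏ v ∈ F, X v) * monomial b (1 : 𝕜) ∈ SRideal 𝕜 Δ ⊔ Ideal.span (Set.range θ) := by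
  obtain ⟨a, rfl⟩ := exists_linFs hθ
  set J := SRideal 𝕜 Δ ⊔ Ideal.span (Set.range (fun j => linF (a j))) with hJ
  induction k with
  | zero => ?_
  | succ k ih => ?_
  all_goals
    intro F hFk b hb
    by_cases hF : F ∈ Δ
    swap
    · exact Ideal.mul_mem_right _ _ (Ideal.mem_sup_left (Ideal.subset_span ⟨F, hF, rfl⟩))
    obtain ⟨v, hv⟩ : ∃ v, b v ≠ 0 := by
      by_contra hc; push Not at hc
      have : b = 0 := Finsupp.ext hc
      simp [this] at hb
    obtain ⟨c, rfl⟩ : ∃ c, b = c + Finsupp.single v 1 := by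
      refine ⟨b - Finsupp.single v 1, ?_⟩
      rw [tsub_add_cancel_of_le]
      rw [Finsupp.single_le_iff]; omega
    let Φ : (σ → 𝕜) →ₗ[𝕜] MvPolynomial σ 𝕜 :=
      (LinearMap.mulLeft 𝕜 ((∏ v ∈ F, X v) * monomial c (1 : 𝕜))) ∘ₗ linF
    have hW := spans_top h hF ((J.restrictScalars 𝕜).comap Φ) (fun j => by
        change _ * linF (a j) ∈ J
        exact Ideal.mul_mem_left _ _ (Ideal.mem_sup_right (Ideal.subset_span ⟨j, rfl⟩))) (fun u hu => by
        change _ * linF (Pi.single u 1) ∈ J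
        rw [linF_single]
        have hcard : Fᶜ.card = (insert u F)ᶜ.card + 1 := by
          have e1 := Finset.card_add_card_compl F
          have e2 := Finset.card_add_card_compl (insert u F)
          rw [Finset.card_insert_of_notMem hu] at e2
          omega
        first
        | omega
        | (have h3 := ih (insert u F) (by omega) c (by
              rw [map_add, Finsupp.degree_single] at hb; omega)
           rw [Finset.prod_insert hu] at h3
           convert h3 using 1; ring))
    have hv' : Pi.single v 1 ∈ ((J.restrictScalars 𝕜).comap Φ) := by rw [hW]; trivial
    have h4 : ((∏ v ∈ F, X v) * monomial c (1 : 𝕜)) * linF (Pi.single v 1) ∈ J := hv'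
    rw [linF_single] at h4
    convert h4 using 1
    rw [mul_assoc, X, monomial_mul, mul_one]

lemma spans_hilb {Δ : Set (Finset σ)} {n : ℕ} {θ : Fin n → MvPolynomial σ 𝕜}
    (hθ : ∀ i, (θ i).IsHomogeneous 1) (h : Spans Δ θ) (m : ℕ) (hm : Fintype.card σ + 1 ≤ m) :
    hilb 𝕜 (SRideal 𝕜 Δ ⊔ Ideal.span (Set.range θ)) m = 0 := by
  rw [hilb_eq_zero_iff]
  intro g hg
  rw [g.as_sum]
  refine Ideal.sum_mem _ (fun b hb => ?_)
  have hd : b.degree = m := by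
    by_contra hc
    exact (MvPolynomial.mem_support_iff.mp hb) (hg.coeff_eq_zero hc)
  have := spans_mem hθ h (Fintype.card σ) ∅ (by simp) b (by omega)
  have e : monomial b (coeff b g) = C (coeff b g) * ((∏ v ∈ (∅ : Finset σ), X v) * monomial b (1 : 𝕜)) := by
    rw [Finset.prod_empty, one_mul, C_mul_monomial, mul_one]
  rw [e]
  exact Ideal.mul_mem_left _ _ this

lemma finite_of_hilb {J : Ideal (MvPolynomial σ 𝕜)} (N : ℕ) (h : ∀ m, N ≤ m → hilb 𝕜 J m = 0) :
    FiniteDimensional 𝕜 (MvPolynomial σ 𝕜 ⧸ J) := by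
  have : (⊤ : Submodule 𝕜 (MvPolynomial σ 𝕜 ⧸ J)) = (Finset.range N).sup (fun m => quotPiece 𝕜 J m) := by
    symm; rw [eq_top_iff]
    rintro x -
    obtain ⟨g, rfl⟩ := Ideal.Quotient.mk_surjective x
    rw [← sum_homogeneousComponent g, map_sum]
    refine Submodule.sum_mem _ (fun m _ => ?_)
    by_cases hm : m < N
    · exact (Finset.le_sup (f := fun m => quotPiece 𝕜 J m) (Finset.mem_range.mpr hm))
        (mem_quotPiece.mpr ⟨_, homogeneousComponent_isHomogeneous _ _, rfl⟩)
    · rw [Ideal.Quotient.eq_zero_iff_mem.mpr ((hilb_eq_zero_iff J m).mp (h m (by omega)) _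
        (homogeneousComponent_isHomogeneous _ _))]
      exact Submodule.zero_mem _
  have hfin : FiniteDimensional 𝕜 (⊤ : Submodule 𝕜 (MvPolynomial σ 𝕜 ⧸ J)) := by
    rw [this]; infer_instance
  exact Module.finite_def.mpr (Module.Finite.iff_fg.mp hfin)

end Lsop

set_option linter.unusedSectionVars false

section Exch
open MvPolynomial
variable {𝕜 : Type*} [Field 𝕜] {σ : Type*} [Fintype σ] [DecidableEq σ]

lemma eval_comb_zero {z : MvPolynomial σ 𝕜} (hz : z.IsHomogeneous 1) (t s : 𝕜) (p q : σ → 𝕜) :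
    eval (t • p + s • q) z = t * eval p z + s * eval q z := by
  rw [eval_add_lin hz, eval_smul_lin hz, eval_smul_lin hz]

lemma test_vectors {Δ : Set (Finset σ)} {n : ℕ} {y : Fin n → MvPolynomial σ 𝕜}
    (hy : ∀ j, (y j).IsHomogeneous 1) (h : Spans Δ y) (i : Fin n) :
    ∃ P : Finset σ → σ → 𝕜, ∀ z : MvPolynomial σ 𝕜, z.IsHomogeneous 1 →
      (∀ F, P F ≠ 0 → eval (P F) z ≠ 0) → Spans Δ (Function.update y i z) := by
  classical
  let Q : Finset σ → (σ → 𝕜) → Prop := fun F p =>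
    (∀ v ∉ F, p v = 0) ∧ (∀ j, j ≠ i → eval p (y j) = 0) ∧ p ≠ 0
  refine ⟨fun F => if hF : ∃ p, Q F p then hF.choose else 0, ?_⟩
  intro z hz hP F hF p hp hpj
  by_contra hne
  have hQ : Q F p := ⟨hp, fun j hj => by
    have := hpj j; rwa [Function.update_of_ne hj] at this, hne⟩
  have hex : ∃ p, Q F p := ⟨p, hQ⟩
  have hP' := hP F
  simp only [dif_pos hex] at hP'
  obtain ⟨h1, h2, h3⟩ := hex.choose_spec
  set q := hex.choose
  have hqi : eval q (y i) ≠ 0 := by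
    intro h0
    apply h3
    refine h F hF q h1 (fun j => ?_)
    by_cases hj : j = i
    · rw [hj]; exact h0
    · exact h2 j hj
  have hcomb := h F hF (eval q (y i) • p + (- eval p (y i)) • q) (fun v hv => by
    simp [hp v hv, h1 v hv]) (fun j => by
      rw [eval_comb_zero (hy j)]
      by_cases hj : j = i
      · rw [hj]; ring
      · rw [hQ.2.1 j hj, h2 j hj]; ring)
  have hz0 : eval p z = 0 := by
    have := hpj i; rwa [Function.update_self] at this
  have h5 : eval (eval q (y i) • p + (- eval p (y i)) • q) z = 0 := by
    rw [hcomb]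
    have := eval_smul_lin hz 0 (0 : σ → 𝕜)
    simpa using this
  rw [eval_comb_zero hz, hz0, mul_zero, zero_add, mul_eq_zero] at h5
  rcases h5 with h5 | h5
  · rw [neg_eq_zero] at h5
    rw [h5, neg_zero, zero_smul, add_zero, smul_eq_zero] at hcomb
    rcases hcomb with h6 | h6
    · exact hqi h6
    · exact hne h6
  · exact hP' h3 h5

lemma generic_z [Infinite 𝕜] {Δ : Set (Finset σ)} {n : ℕ} {y φ : Fin n → MvPolynomial σ 𝕜}
    (hy : ∀ j, (y j).IsHomogeneous 1) (h : Spans Δ y)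
    (hφ : ∀ j, (φ j).IsHomogeneous 1) (h' : Spans Δ φ) (i : Fin n) :
    ∃ z : MvPolynomial σ 𝕜, z.IsHomogeneous 1 ∧ Spans Δ (Function.update y i z) ∧
      Spans Δ (Function.update φ i z) := by
  classical
  obtain ⟨P, hP⟩ := test_vectors hy h i
  obtain ⟨P', hP'⟩ := test_vectors hφ h' i
  let ι := {x : Finset σ × Bool // (if x.2 then P x.1 else P' x.1) ≠ 0}
  obtain ⟨f, hf⟩ := Module.exists_dual_forall_apply_ne_zero (K := 𝕜) (ι := ι)
    (fun x : ι => if x.1.2 then P x.1.1 else P' x.1.1) (fun x => x.2)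
  let z := linF (fun u => f (Pi.single u 1))
  have hzf : ∀ p : σ → 𝕜, eval p z = f p := by
    intro p
    rw [eval_linF]
    conv_rhs => rw [pi_eq_sum_univ' p]
    rw [map_sum]
    refine Finset.sum_congr rfl (fun u _ => ?_)
    rw [map_smul, smul_eq_mul, mul_comm]
  refine ⟨z, linF_homog _, hP z (linF_homog _) ?_, hP' z (linF_homog _) ?_⟩
  · intro F hF
    rw [hzf]
    have := hf ⟨(F, true), by simpa using hF⟩
    simpa using this
  · intro F hF
    rw [hzf]
    have := hf ⟨(F, false), by simpa using hF⟩
    simpa using this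

lemma update_homog {n : ℕ} {y : Fin n → MvPolynomial σ 𝕜}
    (hy : ∀ j, (y j).IsHomogeneous 1) (i : Fin n) {z : MvPolynomial σ 𝕜} (hz : z.IsHomogeneous 1) :
    ∀ j, (Function.update y i z j).IsHomogeneous 1 := by
  intro j
  by_cases hj : j = i
  · subst hj; simpa using hz
  · rw [Function.update_of_ne hj]; exact hy j

lemma exch_aux {K : Ideal (MvPolynomial σ 𝕜)} (hK : IsHomogIdeal 𝕜 K) {y z : MvPolynomial σ 𝕜}
    (hy : y.IsHomogeneous 1) (hz : z.IsHomogeneous 1) (N : ℕ)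
    (h1 : ∀ m, N ≤ m → hilb 𝕜 (K ⊔ Ideal.span {y}) m = 0)
    (h2 : ∀ m, N ≤ m → hilb 𝕜 (K ⊔ Ideal.span {z}) m = 0)
    (hyK : KS K y = 0) : KS K z = 0 := by
  rw [KS_eq_zero_iff] at hyK ⊢
  have hbig : ∀ m, N ≤ m → kdim K z m = 0 := by
    intro m hm
    have e1 := hilb_step hK hy m
    have e2 := hilb_step hK hz m
    rw [h1 (m+1) (by omega), hyK m] at e1
    rw [h2 (m+1) (by omega)] at e2
    omega
  intro m
  rw [kdim_eq_zero_iff]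
  intro g hg hzg
  have hp : ∀ k, y ^ k * g ∈ K → g ∈ K := by
    intro k
    induction k with
    | zero => simp
    | succ k ih =>
      intro h
      rw [pow_succ', mul_assoc] at h
      exact ih (nzd_of_kdim hK hy hyK _ h)
  apply hp N
  refine (kdim_eq_zero_iff K z (N + m)).mp (hbig _ (by omega)) _ ?_ ?_
  · simpa using (hy.pow N).mul hg
  · rw [mul_left_comm]; exact Ideal.mul_mem_left _ _ hzg

lemma exchange {Δ : Set (Finset σ)} {n : ℕ} {y : Fin n → MvPolynomial σ 𝕜}
    (hy : ∀ j, (y j).IsHomogeneous 1) (h : Spans Δ y) (i : Fin n) {z : MvPolynomial σ 𝕜}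
    (hz : z.IsHomogeneous 1) (h' : Spans Δ (Function.update y i z))
    (hR : HReg (SRideal 𝕜 Δ) y) : HReg (SRideal 𝕜 Δ) (Function.update y i z) := by
  rcases n with _ | n
  · exact i.elim0
  have hz' := update_homog hy i hz
  rw [HReg_succAbove (SRideal_homog Δ) hy i] at hR
  rw [HReg_succAbove (SRideal_homog Δ) hz' i]
  have e : (fun j => Function.update y i z (i.succAbove j)) = fun j => y (i.succAbove j) := by
    funext j; rw [Function.update_of_ne (Fin.succAbove_ne i j)]
  have s1 := spans_hilb hy h
  have s2 := spans_hilb hz' h'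
  rw [range_succAbove_union _ i, Ideal.span_union, ← sup_assoc] at s1 s2
  rw [e] at s2 ⊢
  rw [Function.update_self] at s2 ⊢
  refine ⟨hR.1, exch_aux (isHomog_linspan _ ?_ (SRideal_homog Δ)) (hy i) hz _ s1 s2 hR.2⟩
  rintro _ ⟨j, rfl⟩; exact hy _

lemma HReg_all [Infinite 𝕜] {Δ : Set (Finset σ)} {n : ℕ} (k : ℕ) :
    ∀ y φ : Fin n → MvPolynomial σ 𝕜, 
    (∀ j, (y j).IsHomogeneous 1) → Spans Δ y →
    (∀ j, (φ j).IsHomogeneous 1) → Spans Δ φ → (∀ j : Fin n, k ≤ j.val → y j = φ j) →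
    HReg (SRideal 𝕜 Δ) y → HReg (SRideal 𝕜 Δ) φ := by
  induction k with
  | zero => 
    intro y φ _ _ _ _ h hR
    have : y = φ := funext fun j => h j (by omega)
    rwa [← this]
  | succ k ih =>
    intro y φ hy sy hφ sφ h hR
    by_cases hk : k < n
    · let i : Fin n := ⟨k, hk⟩
      obtain ⟨z, hz, s1, s2⟩ := generic_z hy sy hφ sφ i
      have r1 := exchange hy sy i hz s1 hR
      have r2 := ih _ _ (update_homog hy i hz) s1 (update_homog hφ i hz) s2 (fun j hj => by
        by_cases hji : j = i
        · subst hji; simp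
        · rw [Function.update_of_ne hji, Function.update_of_ne hji]
          apply h
          have : j.val ≠ k := fun hh => hji (Fin.ext hh)
          omega) r1
      have e : Function.update (Function.update φ i z) i (φ i) = φ := by simp
      have := exchange (update_homog hφ i hz) s2 i (hφ i) (by rw [e]; exact sφ) r2
      rwa [e] at this
    · exact ih y φ hy sy hφ sφ (fun j hj => by have := j.2; omega) hR

end Exch

set_option linter.unusedSectionVars false

section DS
variable {𝕜 : Type*} [Field 𝕜] [CharZero 𝕜] {W : Type*} [Fintype W] [LinearOrder W]

lemma sgn_swap (G : Finset W) {v w : W} (hv : v ∉ G) (hw : w ∉ G) (hvw : v < w) :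
    (-1 : 𝕜) ^ ((G.filter (fun u => u < v)).card) *
      (-1 : 𝕜) ^ (((insert v G).filter (fun u => u < w)).card) =
    - ((-1 : 𝕜) ^ ((G.filter (fun u => u < w)).card) *
      (-1 : 𝕜) ^ (((insert w G).filter (fun u => u < v)).card)) := by
  rw [Finset.filter_insert, if_pos hvw, Finset.card_insert_of_notMem (by simp [hv]),
    Finset.filter_insert, if_neg (not_lt.mpr hvw.le), pow_succ]
  ring

lemma bdry_bdry (f : Finset W → 𝕜) : bdryMap 𝕜 (bdryMap 𝕜 f) = 0 := by
  funext G
  let g : W → W → 𝕜 := fun v w => if v ∉ G ∧ w ∉ insert v G then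
    (-1 : 𝕜) ^ ((G.filter (fun u => u < v)).card) *
      ((-1 : 𝕜) ^ (((insert v G).filter (fun u => u < w)).card) * f (insert w (insert v G))) else 0
  have hg : ∀ v w, g v w = - g w v := by
    intro v w
    simp only [g]
    by_cases h : v ∉ G ∧ w ∉ insert v G
    · have h' : w ∉ G ∧ v ∉ insert w G := by
        simp only [Finset.mem_insert, not_or] at h ⊢
        exact ⟨h.2.2, fun e => h.2.1 e.symm, h.1⟩
      rw [if_pos h, if_pos h', Finset.insert_comm w v, ← mul_assoc, ← mul_assoc]
      have hne : v ≠ w := by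
        intro e; apply h.2; simp [e]
      rcases lt_or_gt_of_ne hne with hl | hl
      · rw [sgn_swap G h.1 h'.1 hl]; ring
      · rw [sgn_swap G h'.1 h.1 hl]; ring
    · have h' : ¬ (w ∉ G ∧ v ∉ insert w G) := by
        intro h'; apply h
        simp only [Finset.mem_insert, not_or] at h' ⊢
        exact ⟨h'.2.2, fun e => h'.2.1 e.symm, h'.1⟩
      rw [if_neg h, if_neg h']; simp
  have e : bdryMap 𝕜 (bdryMap 𝕜 f) G = ∑ v, ∑ w, g v w := by
    change ∑ v ∈ Gᶜ, _ * (∑ w ∈ (insert v G)ᶜ, _) = _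
    have : ∀ v, ∑ w, g v w = if v ∈ Gᶜ then 
      ((-1 : 𝕜) ^ ((G.filter (fun u => u < v)).card)) * (∑ w ∈ (insert v G)ᶜ, 
        (-1 : 𝕜) ^ (((insert v G).filter (fun u => u < w)).card) * f (insert w (insert v G))) else 0 := by
      intro v
      by_cases hv : v ∈ Gᶜ
      · rw [if_pos hv, Finset.mul_sum, ← Finset.sum_subset (Finset.subset_univ (insert v G)ᶜ)]
        · refine Finset.sum_congr rfl (fun w hw => ?_)
          simp only [g]
          rw [if_pos ⟨Finset.mem_compl.mp hv, Finset.mem_compl.mp hw⟩]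
        · intro w _ hw
          simp only [g]
          rw [if_neg]
          rintro ⟨_, h⟩; exact hw (Finset.mem_compl.mpr h)
      · rw [if_neg hv]
        refine Finset.sum_eq_zero (fun w _ => ?_)
        simp only [g]
        rw [if_neg]
        rintro ⟨h, _⟩; exact hv (Finset.mem_compl.mpr h)
    rw [Finset.sum_congr rfl (fun v _ => this v), Finset.sum_ite_mem, Finset.univ_inter]
  rw [e]
  have e2 : ∑ v, ∑ w, g v w = - ∑ v, ∑ w, g v w := by
    conv_lhs => rw [Finset.sum_comm]
    rw [← Finset.sum_neg_distrib]
    refine Finset.sum_congr rfl (fun v _ => ?_)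
    rw [← Finset.sum_neg_distrib]
    exact Finset.sum_congr rfl (fun w _ => hg w v)
  exact self_eq_neg.mp e2

lemma finrank_chainsOn (A : Set (Finset W)) :
    Module.finrank 𝕜 (chainsOn 𝕜 A) = A.ncard := by
  classical
  let e : chainsOn 𝕜 A ≃ₗ[𝕜] (A → 𝕜) :=
    { toFun := fun f a => f.1 a.1
      map_add' := fun f g => rfl
      map_smul' := fun c f => rfl
      invFun := fun g => ⟨fun G => if h : G ∈ A then g ⟨G, h⟩ else 0, by
        intro G hG
        by_contra h
        exact hG (dif_neg h)⟩
      left_inv := by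
        intro f
        apply Subtype.ext
        funext G
        by_cases h : G ∈ A
        · simp [h]
        · simp only [h, dif_neg, not_false_iff]
          by_contra hc
          exact h (f.2 G (fun h0 => hc h0.symm))
      right_inv := by
        intro g; funext a; simp }
  rw [e.finrank_eq, Module.finrank_pi, Set.ncard_eq_toFinset_card', Set.toFinset_card]

lemma chains_bdry {Λ : Set (Finset W)} (hΛ : IsComplex Λ) (c : ℕ) :
    redBdries 𝕜 Λ c ≤ redCycles 𝕜 Λ c := by
  rintro _ ⟨f, hf, rfl⟩
  refine ⟨?_, ?_⟩
  · intro G hG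
    obtain ⟨v, hv, hne⟩ := Finset.exists_ne_zero_of_sum_ne_zero hG
    have := hf _ (right_ne_zero_of_mul hne)
    refine ⟨hΛ _ this.1 _ (Finset.subset_insert _ _), ?_⟩
    have h2 := this.2
    rw [Finset.card_insert_of_notMem (Finset.mem_compl.mp hv)] at h2
    omega
  · exact bdry_bdry f

lemma rank_bdry (Λ : Set (Finset W)) (c : ℕ) :
    Module.finrank 𝕜 (Submodule.map (bdryMap 𝕜) (chainsOn 𝕜 {F | F ∈ Λ ∧ F.card = c})) +
    Module.finrank 𝕜 (redCycles 𝕜 Λ c) = numFacesCard Λ c := by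
  unfold numFacesCard
  rw [← finrank_chainsOn (𝕜 := 𝕜)]
  set C := chainsOn 𝕜 {F | F ∈ Λ ∧ F.card = c}
  have h := LinearMap.finrank_range_add_finrank_ker ((bdryMap 𝕜).domRestrict C)
  rw [← h]
  congr 1
  · rw [LinearMap.range_domRestrict]
  · rw [LinearMap.ker_domRestrict]
    have : redCycles 𝕜 Λ c = ((LinearMap.ker (bdryMap 𝕜)).submoduleOf C).map C.subtype := by
      unfold redCycles
      rw [Submodule.submoduleOf, Submodule.map_comap_subtype]
    rw [this]
    exact (Submodule.equivMapOfInjective _ (Submodule.subtype_injective _) _).symm.finrank_eq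

lemma rank_H {Λ : Set (Finset W)} (hΛ : IsComplex Λ) (c : ℕ) :
    Module.finrank 𝕜 (redH 𝕜 Λ c) + Module.finrank 𝕜 (redBdries 𝕜 Λ c) =
      Module.finrank 𝕜 (redCycles 𝕜 Λ c) := by
  have h := Submodule.finrank_quotient_add_finrank
    (Submodule.comap (redCycles 𝕜 Λ c).subtype (redBdries 𝕜 Λ c))
  rw [(Submodule.comapSubtypeEquivOfLe (chains_bdry hΛ c)).finrank_eq] at h
  exact h

lemma rank_bdry_zero (Λ : Set (Finset W)) :
    Module.finrank 𝕜 (Submodule.map (bdryMap 𝕜) (chainsOn 𝕜 {F | F ∈ Λ ∧ F.card = 0})) = 0 := by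
  rw [Submodule.finrank_eq_zero, Submodule.eq_bot_iff]
  rintro _ ⟨f, hf, rfl⟩
  funext G
  refine Finset.sum_eq_zero (fun v _ => ?_)
  by_contra h
  have := (hf _ (right_ne_zero_of_mul h)).2
  simp at this

lemma rank_bdry_top (Λ : Set (Finset W)) (c : ℕ) (hc : Fintype.card W ≤ c) :
    Module.finrank 𝕜 (redBdries 𝕜 Λ c) = 0 := by
  rw [Submodule.finrank_eq_zero, Submodule.eq_bot_iff]
  rintro _ ⟨f, hf, rfl⟩
  funext G
  refine Finset.sum_eq_zero (fun v _ => ?_)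
  by_contra h
  have := (hf _ (right_ne_zero_of_mul h)).2
  have h2 := Finset.card_le_univ (insert v G)
  omega

lemma euler_partial {Λ : Set (Finset W)} (hΛ : IsComplex Λ) (N : ℕ) :
    ∑ c ∈ Finset.range (N + 1), (-1 : ℤ) ^ c * numFacesCard Λ c =
    ∑ c ∈ Finset.range (N + 1), (-1 : ℤ) ^ c * Module.finrank 𝕜 (redH 𝕜 Λ c) +
      (-1) ^ N * Module.finrank 𝕜 (redBdries 𝕜 Λ N) := by
  induction N with
  | zero =>
    have h1 := rank_bdry (𝕜 := 𝕜) Λ 0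
    have h2 := rank_H (𝕜 := 𝕜) hΛ 0
    rw [rank_bdry_zero] at h1
    simp; omega
  | succ N ih =>
    rw [Finset.sum_range_succ, ih, Finset.sum_range_succ _ (N+1)]
    have h1 := rank_bdry (𝕜 := 𝕜) Λ (N+1)
    have h2 := rank_H (𝕜 := 𝕜) hΛ (N+1)
    change Module.finrank 𝕜 (redBdries 𝕜 Λ N) + _ = _ at h1
    rw [← h1, ← h2]
    push_cast
    ring

open Classical in
lemma sum_faces {Λ : Set (Finset W)} :
    ∑ G : Finset W with G ∈ Λ, (-1 : ℤ) ^ G.card =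
    ∑ c ∈ Finset.range (Fintype.card W + 1), (-1 : ℤ) ^ c * numFacesCard Λ c := by
  rw [← Finset.sum_fiberwise_of_maps_to (g := Finset.card) (t := Finset.range (Fintype.card W + 1))]
  · refine Finset.sum_congr rfl (fun c _ => ?_)
    rw [Finset.sum_congr rfl (g := fun _ => (-1 : ℤ) ^ c)]
    · rw [Finset.sum_const, nsmul_eq_mul, mul_comm]
      congr 2
      unfold numFacesCard
      rw [Set.ncard_eq_toFinset_card']
      congr 1
      ext G; simp
    · intro G hG
      rw [(Finset.mem_filter.mp hG).2]
  · intro G _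
    rw [Finset.mem_range]
    have := Finset.card_le_univ G
    omega

lemma link_complex {Δ : Set (Finset W)} (hΔ : IsComplex Δ) (F : Finset W) : IsComplex (link Δ F) := by
  rintro G ⟨h1, h2⟩ H hH
  exact ⟨Finset.disjoint_of_subset_right hH h1, hΔ _ h2 _ (Finset.union_subset_union_right hH)⟩

open Classical in
lemma sphere_euler {Δ : Set (Finset W)} {n : ℕ} (h : IsHomologySphere 𝕜 Δ n) {F : Finset W} (hF : F ∈ Δ) :
    ∑ G : Finset W with G ∈ Δ ∧ F ⊆ G, (-1 : ℤ) ^ (n + 1 - G.card) = 1 := by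
  obtain ⟨hΔ, hd, -, hH⟩ := h
  have h1 := euler_partial (𝕜 := 𝕜) (link_complex hΔ F) (Fintype.card W)
  rw [rank_bdry_top _ _ le_rfl, ← sum_faces] at h1
  have hFn := hd F hF
  have hcard : F.card ≤ Fintype.card W := Finset.card_le_univ F
  have h2 : ∑ G : Finset W with G ∈ link Δ F, (-1 : ℤ) ^ G.card = (-1) ^ (n + 1 - F.card) := by
    rw [h1]
    simp only [Nat.cast_zero, mul_zero, add_zero]
    rw [Finset.sum_congr rfl (fun c _ => by rw [hH F hF c])]
    have hle : n + 1 - F.card ≤ Fintype.card W := by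
      by_contra hlt
      have hz : ∑ G : Finset W with G ∈ link Δ F, (-1 : ℤ) ^ G.card = 0 := by
        rw [h1]
        simp only [Nat.cast_zero, mul_zero, add_zero]
        refine Finset.sum_eq_zero (fun c hc => ?_)
        rw [hH F hF c, if_neg]
        · simp
        · rw [Finset.mem_range] at hc; omega
      have h3 := rank_H (𝕜 := 𝕜) (link_complex hΔ F) (n + 1 - F.card)
      have h4 := rank_bdry (𝕜 := 𝕜) (link Δ F) (n + 1 - F.card)
      rw [hH F hF, if_pos (by omega)] at h3
      have h5 : numFacesCard (link Δ F) (n + 1 - F.card) = 0 := by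
        unfold numFacesCard
        rw [Set.ncard_eq_zero]
        ext G
        simp only [Set.mem_ofPred_eq, Set.mem_empty_iff_false, iff_false, not_and]
        intro _ h
        have := Finset.card_le_univ G
        omega
      omega
    rw [Finset.sum_eq_single (n + 1 - F.card)]
    · rw [if_pos (by omega)]; simp
    · intro c _ hc
      rw [if_neg (by omega)]; simp
    · intro hc
      exact absurd (Finset.mem_range.mpr (by omega)) hc
  have h3 : ∑ G : Finset W with G ∈ Δ ∧ F ⊆ G, (-1 : ℤ) ^ (n + 1 - G.card) =
      ∑ G : Finset W with G ∈ link Δ F, (-1 : ℤ) ^ (n + 1 - F.card) * (-1 : ℤ) ^ G.card := by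
    symm
    refine Finset.sum_bij' (fun G _ => F ∪ G) (fun G _ => G \ F) ?_ ?_ ?_ ?_ ?_
    · intro G hG
      have := (Finset.mem_filter.mp hG).2
      simp only [Finset.mem_filter, Finset.mem_univ, true_and]
      exact ⟨this.2, Finset.subset_union_left⟩
    · intro G hG
      have := (Finset.mem_filter.mp hG).2
      simp only [Finset.mem_filter, Finset.mem_univ, true_and]
      refine ⟨Finset.disjoint_sdiff, ?_⟩
      rw [Finset.union_sdiff_of_subset this.2]; exact this.1
    · intro G hG
      have := (Finset.mem_filter.mp hG).2
      exact Finset.union_sdiff_cancel_left this.1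
    · intro G hG
      have := (Finset.mem_filter.mp hG).2
      exact Finset.union_sdiff_of_subset this.2
    · intro G hG
      have := (Finset.mem_filter.mp hG).2
      have hc := hd _ this.2
      rw [Finset.card_union_of_disjoint this.1] at hc ⊢
      have e : n + 1 - F.card = (n + 1 - (F.card + G.card)) + G.card := by omega
      rw [e, pow_add, mul_assoc, ← pow_add, ← two_mul, pow_mul]
      simp
  rw [h3, ← Finset.mul_sum, h2, ← pow_add, ← two_mul, pow_mul]
  simp

lemma sum_subsets (G : Finset W) (d : ℕ) (hG : G.card ≤ d) :
    ∑ F ∈ G.powerset, (PowerSeries.X : PowerSeries ℤ) ^ F.card * (1 - PowerSeries.X) ^ (d - F.card) =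
      (1 - PowerSeries.X) ^ (d - G.card) := by
  have h := Finset.sum_pow_mul_eq_add_pow (PowerSeries.X : PowerSeries ℤ) (1 - PowerSeries.X) G
  rw [add_sub_cancel, one_pow] at h
  calc _ = ∑ F ∈ G.powerset, (PowerSeries.X : PowerSeries ℤ) ^ F.card *
        (1 - PowerSeries.X) ^ (G.card - F.card) * (1 - PowerSeries.X) ^ (d - G.card) := by
        refine Finset.sum_congr rfl (fun F hF => ?_)
        have := Finset.card_le_card (Finset.mem_powerset.mp hF)
        rw [mul_assoc, ← pow_add]
        congr 2; omega
    _ = _ := by rw [← Finset.sum_mul, h, one_mul]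

open Classical in
theorem dehn_sommerville {Δ : Set (Finset W)} {d : ℕ} (hd : 1 ≤ d) (h : IsHomologySphere 𝕜 Δ (d - 1))
    (i : ℕ) (hi : i ≤ d) : hVec Δ d i = hVec Δ d (d - i) := by
  obtain ⟨n, rfl⟩ : ∃ n, d = n + 1 := ⟨d - 1, by omega⟩
  rw [Nat.add_sub_cancel] at h
  have hdim := h.2.1
  have hΔ := h.1
  have key : (∑ F : Finset W with F ∈ Δ,
      ((PowerSeries.X : PowerSeries ℤ) ^ F.card * (1 - PowerSeries.X) ^ (n + 1 - F.card))) =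
      ∑ G : Finset W with G ∈ Δ, (-1) ^ (n + 1 - G.card) * (1 - PowerSeries.X) ^ (n + 1 - G.card) := by
    calc _ = ∑ F : Finset W with F ∈ Δ, ∑ G : Finset W with G ∈ Δ, if F ⊆ G then
          (-1 : PowerSeries ℤ) ^ (n + 1 - G.card) *
          ((PowerSeries.X : PowerSeries ℤ) ^ F.card * (1 - PowerSeries.X) ^ (n + 1 - F.card)) else 0 := by
          refine Finset.sum_congr rfl (fun F hF => ?_)
          have := congrArg (Int.cast : ℤ → PowerSeries ℤ) (sphere_euler h (Finset.mem_filter.mp hF).2)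
          rw [← Finset.sum_filter, Finset.filter_filter, ← Finset.sum_mul]
          push_cast at this
          rw [this, one_mul]
      _ = _ := by
          rw [Finset.sum_comm]
          refine Finset.sum_congr rfl (fun G hG => ?_)
          have hG' := (Finset.mem_filter.mp hG).2
          rw [← sum_subsets G (n+1) (hdim G hG'), Finset.mul_sum, ← Finset.sum_filter]
          refine Finset.sum_congr ?_ (fun _ _ => rfl)
          ext F
          simp only [Finset.mem_filter, Finset.mem_univ, true_and, Finset.mem_powerset]
          exact ⟨fun h => h.2, fun h => ⟨hΔ _ hG' _ h, h⟩⟩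
  rw [← coeff_hVec, ← coeff_hVec Δ (n+1) (n+1-i)]
  conv_lhs => rw [key]
  rw [map_sum, map_sum]
  refine Finset.sum_congr rfl (fun G hG => ?_)
  have hG' := hdim G (Finset.mem_filter.mp hG).2
  have hc : (-1 : PowerSeries ℤ) ^ (n + 1 - G.card) = PowerSeries.C ((-1 : ℤ) ^ (n + 1 - G.card)) := by
    simp
  rw [hc, PowerSeries.coeff_C_mul, PowerSeries.coeff_X_pow_mul']
  rw [coeff_one_sub_X_pow', ]
  split_ifs with hle
  · rw [coeff_one_sub_X_pow']
    have e1 : n + 1 - i - G.card = n + 1 - G.card - i := by omega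
    have e2 : i ≤ n + 1 - G.card := by omega
    rw [e1, Nat.choose_symm e2, ← mul_assoc, ← pow_add]
    congr 1
    have e3 : n + 1 - G.card + i = (n + 1 - G.card - i) + 2 * i := by omega
    rw [e3, pow_add, pow_mul]; simp
  · rw [Nat.choose_eq_zero_of_lt (by omega)]; simp

end DS

set_option linter.unusedSectionVars false

section Kos
open MvPolynomial
variable {𝕜 : Type*} [Field 𝕜] {σ : Type*} [Fintype σ] [DecidableEq σ]

/-- homogeneous polynomials of degree `m - 1` (zero for `m = 0`) -/
noncomputable def hpre : ℕ → Submodule 𝕜 (MvPolynomial σ 𝕜)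
  | 0 => ⊥
  | m + 1 => homogeneousSubmodule σ 𝕜 m

lemma mul_hpre {y p : MvPolynomial σ 𝕜} (hy : y.IsHomogeneous 1) {m : ℕ} (hp : p ∈ hpre m) :
    (y * p).IsHomogeneous m := by
  rcases m with _ | m
  · have : p = 0 := hp
    rw [this, mul_zero]; exact isHomogeneous_zero _ _ _
  · have : p.IsHomogeneous m := hp
    have := hy.mul this
    rwa [add_comm] at this

lemma mul_hpre' {y p : MvPolynomial σ 𝕜} (hy : y.IsHomogeneous 1) {m : ℕ} (hp : p ∈ hpre m) :
    y * p ∈ hpre (m + 1) := mul_hpre hy hp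

lemma decomp {L : Ideal (MvPolynomial σ 𝕜)} (hL : IsHomogIdeal 𝕜 L) {ι : Type*} [Fintype ι]
    {y : ι → MvPolynomial σ 𝕜} (hy : ∀ j, (y j).IsHomogeneous 1) {m : ℕ} {f : MvPolynomial σ 𝕜}
    (hf : f.IsHomogeneous m) (h : f ∈ L ⊔ Ideal.span (Set.range y)) :
    ∃ l ∈ L, l.IsHomogeneous m ∧ ∃ c : ι → MvPolynomial σ 𝕜, (∀ j, c j ∈ hpre m) ∧
      f = l + ∑ j, y j * c j := by
  obtain ⟨a, ha, b, hb, rfl⟩ := Submodule.mem_sup.mp h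
  obtain ⟨c, rfl⟩ := Ideal.mem_span_range_iff_exists_fun.mp hb
  have e := homogeneousComponent_of_mem hf (m := m)
  rw [if_pos rfl, map_add, map_sum] at e
  refine ⟨homogeneousComponent m a, hL a ha m, homogeneousComponent_isHomogeneous _ _, ?_⟩
  rcases m with _ | m
  · refine ⟨fun _ => 0, fun _ => Submodule.zero_mem _, ?_⟩
    rw [← e]
    congr 1
    refine Finset.sum_congr rfl (fun j _ => ?_)
    rw [mul_comm, homComp_zero_mul (hy j), mul_zero]
  · refine ⟨fun j => homogeneousComponent m (c j), fun j => homogeneousComponent_isHomogeneous _ _, ?_⟩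
    rw [← e]
    congr 1
    refine Finset.sum_congr rfl (fun j _ => ?_)
    rw [mul_comm, homComp_mul (hy j)]

/-- vanishing of first Koszul homology in a given degree -/
def QK (L : Ideal (MvPolynomial σ 𝕜)) {ι : Type*} [Fintype ι] (y : ι → MvPolynomial σ 𝕜) (m : ℕ) : Prop :=
  ∀ g : ι → MvPolynomial σ 𝕜, (∀ j, (g j).IsHomogeneous m) → ∑ j, y j * g j ∈ L →
    ∃ p : ι → ι → MvPolynomial σ 𝕜, (∀ a b, p a b = - p b a) ∧ (∀ a b, p a b ∈ hpre m) ∧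
      ∀ b, g b - ∑ a, y a * p a b ∈ L

lemma image_castSucc {n : ℕ} (y : Fin (n+1) → MvPolynomial σ 𝕜) (i : ℕ) (hi : i ≤ n) :
    y '' {j | j.val < i} = (fun j : Fin n => y j.castSucc) '' {j | j.val < i} := by
  ext f
  constructor
  · rintro ⟨j, hj, rfl⟩
    have hj' : j.val < i := hj
    exact ⟨⟨j.val, by omega⟩, hj, rfl⟩
  · rintro ⟨j, hj, rfl⟩
    exact ⟨j.castSucc, hj, rfl⟩

lemma partI_castSucc (L : Ideal (MvPolynomial σ 𝕜)) {n : ℕ} (y : Fin (n+1) → MvPolynomial σ 𝕜) (i : ℕ) (hi : i ≤ n) :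
    partI L y i = partI L (fun j : Fin n => y j.castSucc) i := by
  unfold partI; rw [image_castSucc y i hi]

lemma QK_of_reg {L : Ideal (MvPolynomial σ 𝕜)} (hL : IsHomogIdeal 𝕜 L) (m : ℕ) (n : ℕ) :
    ∀ y : Fin n → MvPolynomial σ 𝕜, (∀ j, (y j).IsHomogeneous 1) →
      (∀ i : Fin n, kdim (partI L y i) (y i) m = 0) → QK L y m := by
  induction n with
  | zero =>
    intro y _ _ g _ _
    exact ⟨fun a => a.elim0, fun a => a.elim0, fun a => a.elim0, fun a => a.elim0⟩
  | succ n ih =>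
    intro y hy hk g hg hsum
    let y' : Fin n → MvPolynomial σ 𝕜 := fun j => y j.castSucc
    have hy' : ∀ j, (y' j).IsHomogeneous 1 := fun j => hy _
    have ih' := ih y' hy' (fun i => by
      rw [← partI_castSucc L y i i.2.le]; exact hk i.castSucc)
    rw [Fin.sum_univ_castSucc] at hsum
    have hlast : partI L y (Fin.last n).val = L ⊔ Ideal.span (Set.range y') := by
      rw [Fin.val_last, partI_castSucc L y n le_rfl, partI_last]
    have h1 := (kdim_eq_zero_iff _ _ _).mp (hk (Fin.last n)) (g (Fin.last n)) (hg _) (by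
      rw [hlast]
      have : y (Fin.last n) * g (Fin.last n) =
        (∑ i : Fin n, y i.castSucc * g i.castSucc + y (Fin.last n) * g (Fin.last n)) -
          ∑ i : Fin n, y' i * g i.castSucc := by simp [y']
      rw [this]
      refine Ideal.sub_mem _ (Ideal.mem_sup_left hsum) (Ideal.mem_sup_right ?_)
      exact Ideal.sum_mem _ (fun j _ => Ideal.mul_mem_right _ _ (Ideal.subset_span ⟨j, rfl⟩)))
    rw [hlast] at h1
    obtain ⟨l, hlL, hlh, c, hc, hgl⟩ := decomp hL hy' (hg _) h1
    obtain ⟨p, hp1, hp2, hp3⟩ := ih' (fun j => g j.castSucc + y (Fin.last n) * c j)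
      (fun j => (hg _).add (mul_hpre (hy _) (hc j))) (by
        have : ∑ j : Fin n, y' j * (g j.castSucc + y (Fin.last n) * c j) =
          (∑ i : Fin n, y i.castSucc * g i.castSucc + y (Fin.last n) * g (Fin.last n)) -
            y (Fin.last n) * l := by
          rw [hgl]
          simp only [mul_add, Finset.sum_add_distrib, Finset.mul_sum, y']
          have : ∑ i : Fin n, y i.castSucc * (y (Fin.last n) * c i) =
            ∑ i : Fin n, y (Fin.last n) * (y i.castSucc * c i) :=
            Finset.sum_congr rfl (fun i _ => by ring)
          rw [this]; ring
        rw [this]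
        exact Ideal.sub_mem _ hsum (Ideal.mul_mem_left _ _ hlL))
    refine ⟨fun a b => Fin.lastCases (motive := fun _ => MvPolynomial σ 𝕜)
      (Fin.lastCases (motive := fun _ => MvPolynomial σ 𝕜) 0 (fun b => - c b) b)
      (fun a => Fin.lastCases (motive := fun _ => MvPolynomial σ 𝕜) (c a) (fun b => p a b) b) a, ?_, ?_, ?_⟩
    · intro a b
      refine Fin.lastCases ?_ (fun a => ?_) a <;> refine Fin.lastCases ?_ (fun b => ?_) b
      · simp
      · simp
      · simp
      · simpa using hp1 a b
    · intro a b
      refine Fin.lastCases ?_ (fun a => ?_) a <;> refine Fin.lastCases ?_ (fun b => ?_) b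
      · simp
      · simpa using hc b
      · simpa using hc a
      · simpa using hp2 a b
    · intro b
      rw [Fin.sum_univ_castSucc]
      refine Fin.lastCases ?_ (fun b => ?_) b
      · simp only [Fin.lastCases_last, Fin.lastCases_castSucc, mul_zero, add_zero]
        rw [hgl]
        simpa [y'] using hlL
      · simp only [Fin.lastCases_last, Fin.lastCases_castSucc]
        have := hp3 b
        convert this using 1
        simp only [y']; ring

lemma QK_drop [CharZero 𝕜] {L : Ideal (MvPolynomial σ 𝕜)} {n : ℕ} {y : Fin (n+1) → MvPolynomial σ 𝕜}
    (hy : ∀ j, (y j).IsHomogeneous 1) (h : ∀ m, QK L y m) :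
    ∀ m, QK L (fun j : Fin n => y j.castSucc) m := by
  have key : ∀ (m : ℕ) (g : Fin n → MvPolynomial σ 𝕜), (∀ j, (g j).IsHomogeneous m) →
      ∑ j : Fin n, y j.castSucc * g j ∈ L → ∃ p : Fin (n+1) → Fin (n+1) → MvPolynomial σ 𝕜,
      (∀ a b, p a b = - p b a) ∧ (∀ a b, p a b ∈ hpre m) ∧
      (∀ b : Fin n, g b - (∑ a : Fin n, y a.castSucc * p a.castSucc b.castSucc +
        y (Fin.last n) * p (Fin.last n) b.castSucc) ∈ L) ∧
      ∑ a : Fin n, y a.castSucc * p (Fin.last n) a.castSucc ∈ L := by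
    intro m g hg hsum
    obtain ⟨p, hp1, hp2, hp3⟩ := h m (Fin.snoc (α := fun _ => MvPolynomial σ 𝕜) g 0) (by
      intro j
      refine Fin.lastCases ?_ (fun j => ?_) j
      · simpa using isHomogeneous_zero σ 𝕜 m
      · simpa using hg j) (by
      rw [Fin.sum_univ_castSucc]; simpa using hsum)
    refine ⟨p, hp1, hp2, fun b => ?_, ?_⟩
    · have := hp3 b.castSucc
      rw [Fin.sum_univ_castSucc] at this
      simpa using this
    · have h1 := hp3 (Fin.last n)
      rw [Fin.sum_univ_castSucc] at h1
      have h0 : p (Fin.last n) (Fin.last n) = 0 := self_eq_neg.mp (hp1 _ _)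
      rw [h0] at h1
      simp only [Fin.snoc_last, mul_zero, add_zero, zero_sub] at h1
      convert h1 using 1
      rw [← Finset.sum_neg_distrib]
      refine Finset.sum_congr rfl (fun a _ => ?_)
      rw [hp1 (Fin.last n)]; ring
  intro m
  induction m with
  | zero =>
    intro g hg hsum
    obtain ⟨p, hp1, hp2, hp3, -⟩ := key 0 g hg hsum
    refine ⟨fun a b => p a.castSucc b.castSucc, fun a b => hp1 _ _, fun a b => hp2 _ _, fun b => ?_⟩
    have h0 : p (Fin.last n) b.castSucc = 0 := hp2 _ _
    simpa [h0] using hp3 b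
  | succ m ih =>
    intro g hg hsum
    obtain ⟨p, hp1, hp2, hp3, hp4⟩ := key (m+1) g hg hsum
    obtain ⟨u, hu1, hu2, hu3⟩ := ih (fun a => p (Fin.last n) a.castSucc) (fun a => hp2 _ _) hp4
    refine ⟨fun a b => p a.castSucc b.castSucc + y (Fin.last n) * u a b, fun a b => ?_, fun a b => ?_, fun b => ?_⟩
    · beta_reduce; rw [hp1 a.castSucc b.castSucc, hu1 a b]; ring
    · exact Submodule.add_mem _ (hp2 _ _) (mul_hpre' (hy _) (hu2 a b))
    · have := Ideal.add_mem _ (hp3 b) (Ideal.mul_mem_left L (y (Fin.last n)) (hu3 b))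
      convert this using 1
      simp only [mul_add, Finset.sum_add_distrib, mul_sub, Finset.mul_sum]
      have : ∑ a : Fin n, y a.castSucc * (y (Fin.last n) * u a b) =
        ∑ a : Fin n, y (Fin.last n) * (y a.castSucc * u a b) :=
        Finset.sum_congr rfl (fun i _ => by ring)
      rw [this]; ring

lemma reg_of_QK [CharZero 𝕜] {L : Ideal (MvPolynomial σ 𝕜)} (hL : IsHomogIdeal 𝕜 L) (n : ℕ) :
    ∀ y : Fin n → MvPolynomial σ 𝕜, (∀ j, (y j).IsHomogeneous 1) →
      (∀ m, QK L y m) → IsRegSeq 𝕜 L y := by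
  induction n with
  | zero => intro y _ _ i; exact i.elim0
  | succ n ih =>
    intro y hy h i
    have hp : ∀ i : Fin (n+1), L ⊔ Ideal.span (y '' {j | j < i}) = partI L y i := fun i => rfl
    rw [hp]
    refine Fin.lastCases ?_ (fun i => ?_) i
    · intro g hg
      refine nzd_of_kdim (partI_homog hL hy _) (hy _) (fun m => ?_) g hg
      rw [kdim_eq_zero_iff]
      intro f hf hyf
      rw [Fin.val_last, partI_castSucc L y n le_rfl, partI_last] at hyf ⊢
      obtain ⟨l, hlL, hlh, c, hc, hgl⟩ := decomp hL (fun j => hy _) ((hy (Fin.last n)).mul hf) hyf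
      rw [add_comm 1 m] at hc
      obtain ⟨p, hp1, hp2, hp3⟩ := h m (Fin.snoc (α := fun _ => MvPolynomial σ 𝕜) (fun j => - c j) f) (by
        intro j
        refine Fin.lastCases ?_ (fun j => ?_) j
        · simpa using hf
        · simp only [Fin.snoc_castSucc]
          exact Submodule.neg_mem (homogeneousSubmodule σ 𝕜 m) (hc j)) (by
        rw [Fin.sum_univ_castSucc]
        simp only [Fin.snoc_castSucc, Fin.snoc_last]
        rw [hgl]
        simpa using hlL)
      have h1 := hp3 (Fin.last n)
      rw [Fin.sum_univ_castSucc] at h1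
      have h0 : p (Fin.last n) (Fin.last n) = 0 := self_eq_neg.mp (hp1 _ _)
      rw [h0] at h1
      simp only [Fin.snoc_last, mul_zero, add_zero] at h1
      rw [← sub_add_cancel f (∑ a : Fin n, y a.castSucc * p a.castSucc (Fin.last n))]
      refine Ideal.add_mem _ (Ideal.mem_sup_left h1) (Ideal.mem_sup_right ?_)
      exact Ideal.sum_mem _ (fun j _ => Ideal.mul_mem_right _ _ (Ideal.subset_span ⟨j, rfl⟩))
    · have := ih (fun j => y j.castSucc) (fun j => hy _) (QK_drop hy h) i
      rw [show L ⊔ Ideal.span ((fun j : Fin n => y j.castSucc) '' {j | j < i}) =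
        partI L (fun j : Fin n => y j.castSucc) i from rfl, ← partI_castSucc L y i i.2.le] at this
      exact this

lemma sum_antisymm {κ : Type*} [Fintype κ] [CharZero 𝕜] (z : κ → MvPolynomial σ 𝕜) (s : κ → κ → MvPolynomial σ 𝕜)
    (hs : ∀ a b, s a b = - s b a) : ∑ a, z a * ∑ b, z b * s b a = 0 := by
  simp only [Finset.mul_sum]
  refine self_eq_neg.mp ?_
  conv_lhs => rw [Finset.sum_comm]
  rw [← Finset.sum_neg_distrib]
  refine Finset.sum_congr rfl (fun a _ => ?_)
  rw [← Finset.sum_neg_distrib]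
  refine Finset.sum_congr rfl (fun b _ => ?_)
  rw [hs]; ring

lemma QK_step [CharZero 𝕜] {L : Ideal (MvPolynomial σ 𝕜)} (hL : IsHomogIdeal 𝕜 L) {n : ℕ} {κ : Type*} [Fintype κ]
    {y : Fin n → MvPolynomial σ 𝕜} (hy : ∀ j, (y j).IsHomogeneous 1)
    {z : κ → MvPolynomial σ 𝕜} (hz : ∀ j, (z j).IsHomogeneous 1) (m : ℕ)
    (hK : QK ⊥ (Sum.elim y z) (m + 1)) (hQ : QK L y m)
    (hS : ∀ f : MvPolynomial σ 𝕜, f.IsHomogeneous m → f ∈ L ⊔ Ideal.span (Set.range y))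
    (hgen : ∀ f ∈ L, f.IsHomogeneous (m + 2) → ∃ l : Fin n ⊕ κ → MvPolynomial σ 𝕜, (∀ b, l b ∈ L) ∧
      (∀ b, (l b).IsHomogeneous (m+1)) ∧ f = ∑ b, Sum.elim y z b * l b) : QK L y (m+1) := by
  intro g hg hsum
  obtain ⟨l, hlL, hlh, hl⟩ := hgen _ hsum (IsHomogeneous.sum _ _ _ (fun j _ => by
    have := (hy j).mul (hg j)
    rwa [show 1 + (m+1) = m + 2 by ring] at this))
  obtain ⟨p, hp1, hp2, hp3⟩ := hK (Sum.elim (fun j => g j - l (Sum.inl j)) (fun t => - l (Sum.inr t))) (by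
    rintro (j | t)
    · exact (hg j).sub (hlh _)
    · exact (hlh _).neg) (by
    rw [Ideal.mem_bot]
    rw [Fintype.sum_sum_type] at hl ⊢
    simp only [Sum.elim_inl, Sum.elim_inr, mul_sub, mul_neg, Finset.sum_sub_distrib, Finset.sum_neg_distrib] at hl ⊢
    rw [hl]; ring)
  simp only [Ideal.mem_bot, sub_eq_zero] at hp3
  have hpl : ∀ j, g j = l (Sum.inl j) + (∑ a, y a * p (Sum.inl a) (Sum.inl j) +
      ∑ t, z t * p (Sum.inr t) (Sum.inl j)) := by
    intro j
    have := hp3 (Sum.inl j)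
    rw [Fintype.sum_sum_type] at this
    simp only [Sum.elim_inl, Sum.elim_inr] at this
    rw [← this]; ring
  have hpr : ∀ t, - l (Sum.inr t) = (∑ a, y a * p (Sum.inl a) (Sum.inr t) +
      ∑ t', z t' * p (Sum.inr t') (Sum.inr t)) := by
    intro j
    have := hp3 (Sum.inr j)
    rw [Fintype.sum_sum_type] at this
    simpa only [Sum.elim_inl, Sum.elim_inr] using this
  have hdec : ∀ t' t : κ, ∃ q ∈ L, ∃ s : Fin n → MvPolynomial σ 𝕜, (∀ j, s j ∈ hpre m) ∧
      p (Sum.inr t') (Sum.inr t) = q + ∑ j, y j * s j := by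
    intro t' t
    obtain ⟨q, hq, -, s, hs, e⟩ := decomp hL hy (hp2 (Sum.inr t') (Sum.inr t)) (hS _ (hp2 (Sum.inr t') (Sum.inr t)))
    exact ⟨q, hq, s, hs, e⟩
  choose q0 hq0 s0 hs0 hqs0 using hdec
  let h2 : MvPolynomial σ 𝕜 := C (1/2 : 𝕜)
  have hh2 : h2 + h2 = 1 := by
    simp only [h2]; rw [← C_add]; norm_num
  let q : κ → κ → MvPolynomial σ 𝕜 := fun a b => h2 * (q0 a b - q0 b a)
  let s : Fin n → κ → κ → MvPolynomial σ 𝕜 := fun j a b => h2 * (s0 a b j - s0 b a j)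
  have hq : ∀ a b, q a b ∈ L := fun a b => Ideal.mul_mem_left _ _ (Ideal.sub_mem _ (hq0 _ _) (hq0 _ _))
  have hs : ∀ j a b, s j a b ∈ hpre m := by
    intro j a b
    simp only [s, h2]
    rw [← smul_eq_C_mul]
    exact Submodule.smul_mem _ _ (Submodule.sub_mem _ (hs0 _ _ _) (hs0 _ _ _))
  have hsa : ∀ j a b, s j a b = - s j b a := by
    intro j a b; simp only [s]; ring
  have hqs : ∀ a b, p (Sum.inr a) (Sum.inr b) = q a b + ∑ j, y j * s j a b := by
    intro a b
    have e1 : ∑ j, y j * s j a b = h2 * (∑ j, y j * s0 a b j - ∑ j, y j * s0 b a j) := by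
      rw [← Finset.sum_sub_distrib, Finset.mul_sum]
      refine Finset.sum_congr rfl (fun j _ => ?_)
      simp only [s]; ring
    rw [e1]
    simp only [q]
    have e2 := hqs0 a b
    have e3 := hqs0 b a
    rw [hp1] at e3
    linear_combination (-p (Sum.inr a) (Sum.inr b)) * hh2 + h2 * e2 - h2 * e3
  have hG : ∀ t : κ, ∃ u : Fin n → Fin n → MvPolynomial σ 𝕜, (∀ a b, u a b = - u b a) ∧
      (∀ a b, u a b ∈ hpre m) ∧ ∀ b, (p (Sum.inl b) (Sum.inr t) + ∑ t', z t' * s b t' t) -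
        ∑ a, y a * u a b ∈ L := by
    intro t
    refine hQ (fun b => p (Sum.inl b) (Sum.inr t) + ∑ t', z t' * s b t' t) (fun b => ?_) ?_
    · exact (hp2 (Sum.inl b) (Sum.inr t) : IsHomogeneous _ m).add
        (IsHomogeneous.sum _ _ _ (fun t' _ => mul_hpre (hz _) (hs _ _ _)))
    · have : ∑ j, y j * (p (Sum.inl j) (Sum.inr t) + ∑ t', z t' * s j t' t) =
          - l (Sum.inr t) - ∑ t', z t' * q t' t := by
        rw [hpr]
        simp only [hqs, mul_add, Finset.sum_add_distrib, Finset.mul_sum]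
        have : ∑ i, ∑ j, y i * (z j * s i j t) = ∑ j, ∑ i, z j * (y i * s i j t) := by
          rw [Finset.sum_comm]
          exact Finset.sum_congr rfl (fun _ _ => Finset.sum_congr rfl (fun _ _ => by ring))
        rw [this]; ring
      rw [this]
      exact Ideal.sub_mem _ (neg_mem (hlL _)) (Ideal.sum_mem _ (fun _ _ => Ideal.mul_mem_left _ _ (hq _ _)))
  choose u hu1 hu2 hu3 using hG
  refine ⟨fun a b => p (Sum.inl a) (Sum.inl b) - ∑ t, z t * u t a b, fun a b => ?_, fun a b => ?_, fun b => ?_⟩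
  · beta_reduce
    rw [hp1 (Sum.inl a) (Sum.inl b)]
    have : ∑ t, z t * u t a b = - ∑ t, z t * u t b a := by
      rw [← Finset.sum_neg_distrib]
      refine Finset.sum_congr rfl (fun t _ => ?_)
      rw [hu1 t a b]; ring
    rw [this]; ring
  · exact Submodule.sub_mem _ (hp2 _ _) (Submodule.sum_mem _ (fun t _ => mul_hpre' (hz _) (hu2 _ _ _)))
  · have hz0 := sum_antisymm z (s b) (hsa b)
    have e : g b - ∑ a, y a * (p (Sum.inl a) (Sum.inl b) - ∑ t, z t * u t a b) =
        l (Sum.inl b) - ∑ t, z t * ((p (Sum.inl b) (Sum.inr t) + ∑ t', z t' * s b t' t) -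
        ∑ a, y a * u t a b) := by
      rw [hpl b]
      have e1 : ∑ t, z t * p (Sum.inr t) (Sum.inl b) = - ∑ t, z t * p (Sum.inl b) (Sum.inr t) := by
        rw [← Finset.sum_neg_distrib]
        refine Finset.sum_congr rfl (fun t _ => ?_)
        rw [hp1]; ring
      have e2 : ∑ i, ∑ j, y i * (z j * u j i b) = ∑ j, ∑ i, z j * (y i * u j i b) := by
        rw [Finset.sum_comm]
        exact Finset.sum_congr rfl (fun _ _ => Finset.sum_congr rfl (fun _ _ => by ring))
      rw [e1]
      simp only [mul_sub, mul_add, Finset.sum_add_distrib, Finset.sum_sub_distrib] at hz0 ⊢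
      rw [hz0]
      simp only [Finset.mul_sum]
      rw [e2]; ring
    rw [e]
    exact Ideal.sub_mem _ (hlL _) (Ideal.sum_mem _ (fun _ _ => Ideal.mul_mem_left _ _ (hu3 _ _)))

end Kos

set_option linter.unusedSectionVars false

section KosThm
open MvPolynomial
variable {𝕜 : Type*} [Field 𝕜] {σ : Type*} [Fintype σ] [DecidableEq σ]

lemma homog_succ_mem {J : Ideal (MvPolynomial σ 𝕜)} {m : ℕ} {f : MvPolynomial σ 𝕜}
    (hf : f.IsHomogeneous (m+1))
    (h : ∀ v (g : MvPolynomial σ 𝕜), g.IsHomogeneous m → X v * g ∈ J) : f ∈ J := by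
  rw [f.as_sum]
  refine Ideal.sum_mem _ (fun a ha => ?_)
  have hdeg : a.degree = m + 1 := by
    by_contra hne
    exact (mem_support_iff.mp ha) (hf.coeff_eq_zero hne)
  have hne : a ≠ 0 := by rintro rfl; simp at hdeg
  obtain ⟨v, hv⟩ : ∃ v, a v ≠ 0 := by
    by_contra hc; push Not at hc; exact hne (Finsupp.ext hc)
  have hle : Finsupp.single v 1 ≤ a := by
    rw [Finsupp.single_le_iff]; omega
  have h1 : Finsupp.single v 1 + (a - Finsupp.single v 1) = a := add_tsub_cancel_of_le hle
  have h2 : monomial a (coeff a f) = X v * monomial (a - Finsupp.single v 1) (coeff a f) := by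
    rw [X, monomial_mul, h1, one_mul]
  rw [h2]
  apply h
  apply isHomogeneous_monomial
  have := congrArg Finsupp.degree h1
  rw [map_add, Finsupp.degree_single, hdeg] at this
  omega

lemma hilb_succ_zero {J : Ideal (MvPolynomial σ 𝕜)} {m : ℕ} (h : hilb 𝕜 J m = 0) :
    hilb 𝕜 J (m+1) = 0 := by
  rw [hilb_eq_zero_iff] at h ⊢
  intro g hg
  exact homog_succ_mem hg (fun v g hg => Ideal.mul_mem_left _ _ (h g hg))

lemma hilb_zero_of_le {J : Ideal (MvPolynomial σ 𝕜)} {m n : ℕ} (h : hilb 𝕜 J m = 0) (hmn : m ≤ n) :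
    hilb 𝕜 J n = 0 := by
  induction n, hmn using Nat.le_induction with
  | base => exact h
  | succ n _ ih => exact hilb_succ_zero ih

lemma SRideal_univ : SRideal 𝕜 (Set.univ : Set (Finset σ)) = ⊥ := by
  unfold SRideal; simp

lemma bot_homog : IsHomogIdeal 𝕜 (⊥ : Ideal (MvPolynomial σ 𝕜)) := by
  rw [← SRideal_univ]; exact SRideal_homog _

lemma HS_bot : (1 - PowerSeries.X) ^ (Fintype.card σ) * HS (⊥ : Ideal (MvPolynomial σ 𝕜)) = 1 := by
  classical
  have h := HS_SR_mul (𝕜 := 𝕜) (σ := σ) (Δ := Set.univ) (fun _ _ _ _ => Set.mem_univ _)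
    (Fintype.card σ) (fun F _ => Finset.card_le_univ F)
  rw [SRideal_univ] at h
  rw [h]
  have := Finset.sum_pow_mul_eq_add_pow (PowerSeries.X : PowerSeries ℤ) (1 - PowerSeries.X) (univ : Finset σ)
  rw [Finset.powerset_univ, add_sub_cancel, one_pow, Finset.card_univ] at this
  refine Eq.trans (Finset.sum_congr ?_ (fun _ _ => rfl)) this
  ext; simp

lemma hilb_zero_pos {J : Ideal (MvPolynomial σ 𝕜)} (hJ : ∀ c : 𝕜, C c ∈ J → c = 0) : hilb 𝕜 J 0 = 1 := by
  have h1 : hilb 𝕜 J 0 = hilb 𝕜 (⊥ : Ideal (MvPolynomial σ 𝕜)) 0 := by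
    apply hilb_congr
    intro g hg
    have : ∃ c : 𝕜, g = C c := ⟨_, totalDegree_eq_zero_iff_eq_C.mp (by
      by_cases h0 : g = 0
      · simp [h0]
      · exact hg.totalDegree h0)⟩
    obtain ⟨c, rfl⟩ := this
    constructor
    · intro h; rw [hJ c h]; simp
    · intro h; rw [Ideal.mem_bot] at h; rw [h]; exact Ideal.zero_mem _
  have h2 := congrArg PowerSeries.constantCoeff (HS_bot (𝕜 := 𝕜) (σ := σ))
  simp [HS] at h2
  rw [h1]; exact_mod_cast h2

lemma QK_equiv {L : Ideal (MvPolynomial σ 𝕜)} {ι ι' : Type*} [Fintype ι] [Fintype ι'] (e : ι' ≃ ι)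
    {y : ι → MvPolynomial σ 𝕜} {m : ℕ} (h : QK L (y ∘ e) m) : QK L y m := by
  intro g hg hs
  obtain ⟨p, h1, h2, h3⟩ := h (g ∘ e) (fun j => hg _) (by
    rw [← Equiv.sum_comp e] at hs; exact hs)
  refine ⟨fun a b => p (e.symm a) (e.symm b), fun a b => h1 _ _, fun a b => h2 _ _, fun b => ?_⟩
  have := h3 (e.symm b)
  rw [← Equiv.sum_comp e]
  simpa using this

lemma QK_full {ι : Type*} [Fintype ι] {x : ι → MvPolynomial σ 𝕜} (hx : ∀ j, (x j).IsHomogeneous 1)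
    (hc : Fintype.card ι = Fintype.card σ) (hX : ∀ v, X v ∈ Ideal.span (Set.range x)) (m : ℕ) :
    QK ⊥ x m := by
  let e : Fin (Fintype.card σ) ≃ ι := (finCongr hc.symm).trans (Fintype.equivFin ι).symm
  apply QK_equiv e
  have hx' : ∀ j, ((x ∘ e) j).IsHomogeneous 1 := fun j => hx _
  have hR : IsRegSeq 𝕜 (⊥ : Ideal (MvPolynomial σ 𝕜)) (x ∘ e) := by
    rw [isRegSeq_iff_HReg bot_homog hx', HReg, HS_bot]
    have hr : Set.range (x ∘ e) = Set.range x := by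
      rw [Set.range_comp, e.surjective.range_eq, Set.image_univ]
    rw [hr]
    have h0 : hilb 𝕜 (⊥ ⊔ Ideal.span (Set.range x)) 0 = 1 := by
      apply hilb_zero_pos
      intro c hcc
      rw [bot_sup_eq] at hcc
      have : Ideal.span (Set.range x) ≤ RingHom.ker (constantCoeff (σ := σ) (R := 𝕜)) := by
        rw [Ideal.span_le]
        rintro _ ⟨j, rfl⟩
        show constantCoeff (x j) = 0
        exact (hx j).coeff_eq_zero (by simp)
      have := this hcc
      simpa using this
    have h1 : ∀ m, hilb 𝕜 (⊥ ⊔ Ideal.span (Set.range x)) (m+1) = 0 := by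
      intro m
      rw [hilb_eq_zero_iff]
      intro g hg
      exact homog_succ_mem hg (fun v g _ => Ideal.mul_mem_right _ _ (Ideal.mem_sup_right (hX v)))
    ext m
    rcases m with _ | m
    · rw [bot_sup_eq] at h0 ; simp [HS, h0]
    · rw [bot_sup_eq] at h1 ; simp [HS, h1, PowerSeries.coeff_one]
  apply QK_of_reg bot_homog m _ _ hx'
  intro i
  rw [kdim_eq_zero_iff]
  intro g _ hg
  exact hR i g hg

theorem koszul_reg [CharZero 𝕜] {L : Ideal (MvPolynomial σ 𝕜)} (r : ℕ) {A : Set (MvPolynomial σ 𝕜)}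
    (hA : L = Ideal.span A) (hA' : ∀ a ∈ A, ∃ k ≤ r, a.IsHomogeneous k)
    {n : ℕ} {y : Fin n → MvPolynomial σ 𝕜} (hy : ∀ j, (y j).IsHomogeneous 1)
    (hC : ∀ c : 𝕜, C c ∈ L → c = 0)
    (hreg : ∀ m ≤ r, ∀ i : Fin n, kdim (partI L y i) (y i) m = 0)
    (hS : ∀ m, r ≤ m → ∀ f : MvPolynomial σ 𝕜, f.IsHomogeneous m → f ∈ L ⊔ Ideal.span (Set.range y)) :
    IsRegSeq 𝕜 L y := by
  classical
  have hL : IsHomogIdeal 𝕜 L := by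
    rw [hA]; exact isHomogIdeal_span _ (fun a ha => by obtain ⟨k, _, h⟩ := hA' a ha; exact ⟨k, h⟩)
  have hQ : ∀ m ≤ r, QK L y m := fun m hm => QK_of_reg hL m n y hy (hreg m hm)
  obtain ⟨a, rfl⟩ := exists_linFs hy
  have hli : LinearIndependent 𝕜 a := by
    rw [Fintype.linearIndependent_iff]
    intro c hc
    obtain ⟨p, _, hp2, hp3⟩ := hQ 0 (Nat.zero_le _) (fun j => C (c j)) (fun j => isHomogeneous_C _ _) (by
      have := congrArg (linF (𝕜 := 𝕜) (σ := σ)) hc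
      rw [map_sum, map_zero] at this
      have h2 : ∑ j, linF (a j) * C (c j) = 0 := by
        rw [← this]
        refine Finset.sum_congr rfl (fun j _ => ?_)
        rw [map_smul, smul_eq_C_mul, mul_comm]
      rw [h2]; exact Ideal.zero_mem _)
    intro i
    apply hC
    have hp0 : ∀ a b, p a b = 0 := fun a b => hp2 a b
    simpa [hp0] using hp3 i
  let B := Module.Basis.sumExtend hli
  let κ := (Module.Basis.sumExtendIndex hli)
  have : Fintype κ := by
    have : Finite (Fin n ⊕ κ) := Module.Finite.finite_basis B
    have : Finite κ := Finite.of_injective (Sum.inr : κ → Fin n ⊕ κ) Sum.inr_injective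
    exact Fintype.ofFinite κ
  let z : κ → MvPolynomial σ 𝕜 := fun k => linF (B (Sum.inr k))
  have hz : ∀ j, (z j).IsHomogeneous 1 := fun j => linF_homog _
  have hx : Sum.elim (fun j => linF (a j)) z = fun b => linF (B b) := by
    funext b
    rcases b with b | b
    · simp only [Sum.elim_inl, B, Module.Basis.sumExtend, Trans.trans, Module.Basis.reindex_apply, Module.Basis.extend_apply_self]
      rfl
    · rfl
  have hxh : ∀ j, ((Sum.elim (fun j => linF (a j)) z) j).IsHomogeneous 1 := by
    intro j; rw [hx]; exact linF_homog _
  have hX : ∀ v, X v ∈ Ideal.span (Set.range (Sum.elim (fun j => linF (a j)) z)) := by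
    intro v
    rw [hx, ← linF_single, ← B.sum_repr (Pi.single v 1), map_sum]
    refine Ideal.sum_mem _ (fun b _ => ?_)
    rw [map_smul, smul_eq_C_mul]
    exact Ideal.mul_mem_left _ _ (Ideal.subset_span ⟨b, rfl⟩)
  have hcard : Fintype.card (Fin n ⊕ κ) = Fintype.card σ := by
    rw [← Module.finrank_eq_card_basis B, Module.finrank_fintype_fun_eq_card]
  have hK : ∀ m, QK ⊥ (Sum.elim (fun j => linF (a j)) z) m := QK_full hxh hcard hX
  have hgen : ∀ M, r ≤ M → ∀ f ∈ L, f.IsHomogeneous (M+1) → ∃ l : Fin n ⊕ κ → MvPolynomial σ 𝕜,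
      (∀ b, l b ∈ L) ∧ (∀ b, (l b).IsHomogeneous M) ∧ f = ∑ b, Sum.elim (fun j => linF (a j)) z b * l b := by
    intro M hM f hf hfh
    rw [hA] at hf
    obtain ⟨N, c, g, hsum⟩ := Submodule.mem_span_set'.mp hf
    have key : ∀ i, ∃ l : Fin n ⊕ κ → MvPolynomial σ 𝕜, (∀ b, l b ∈ L) ∧ (∀ b, (l b).IsHomogeneous M) ∧
        homogeneousComponent (M+1) (c i • (g i : MvPolynomial σ 𝕜)) =
          ∑ b, Sum.elim (fun j => linF (a j)) z b * l b := by
      intro i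
      obtain ⟨k, hk, hgk⟩ := hA' _ (g i).2
      obtain ⟨e, rfl⟩ := Nat.exists_eq_add_of_le (hk.trans hM)
      have hcomp : (homogeneousComponent (e+1) (c i)).IsHomogeneous (e+1) := homogeneousComponent_isHomogeneous _ _
      have hmem : homogeneousComponent (e+1) (c i) ∈ ⊥ ⊔ Ideal.span (Set.range (Sum.elim (fun j => linF (a j)) z)) :=
        homog_succ_mem hcomp (fun v g _ => Ideal.mul_mem_right _ _ (Ideal.mem_sup_right (hX v)))
      obtain ⟨l0, hl0, -, q, hq, hqs⟩ := decomp bot_homog hxh hcomp hmem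
      rw [Ideal.mem_bot] at hl0
      subst hl0
      refine ⟨fun b => (g i : MvPolynomial σ 𝕜) * q b, fun b => ?_, fun b => ?_, ?_⟩
      · rw [hA]; exact Ideal.mul_mem_right _ _ (Ideal.subset_span (g i).2)
      · have : (q b).IsHomogeneous e := hq b
        exact hgk.mul this
      · rw [smul_eq_mul, mul_comm, show k + e + 1 = (e + 1) + k by ring, homComp_mul hgk, hqs, zero_add, Finset.mul_sum]
        exact Finset.sum_congr rfl (fun _ _ => by ring)
    choose l h1 h2 h3 using key
    refine ⟨fun b => ∑ i, l i b, fun b => Ideal.sum_mem _ (fun i _ => h1 i b), fun b => IsHomogeneous.sum _ _ _ (fun i _ => h2 i b), ?_⟩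
    have : homogeneousComponent (M+1) f = f := homogeneousComponent_of_mem hfh |>.trans (if_pos rfl)
    rw [← this, ← hsum, map_sum]
    simp only [h3, Finset.mul_sum]
    exact Finset.sum_comm
  have hall : ∀ m, QK L (fun j => linF (a j)) (r + m) := by
    intro m
    induction m with
    | zero => exact hQ r le_rfl
    | succ m ih =>
      exact QK_step hL hy hz (r+m) (hK _) ih (hS _ (by omega)) (fun f hf hfh => hgen (r+m+1) (by omega) f hf hfh)
  apply reg_of_QK hL n _ hy
  intro m
  by_cases hm : m ≤ r
  · exact hQ m hm
  · obtain ⟨e, rfl⟩ := Nat.exists_eq_add_of_le (le_of_not_ge hm)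
    exact hall e

end KosThm

set_option linter.unusedSectionVars false

section MainThm
open MvPolynomial
variable {𝕜 : Type*} [Field 𝕜] {σ : Type*} [Fintype σ] [DecidableEq σ]

lemma wlp_num (H K Q : ℕ → ℕ) (d r : ℕ) (hr1 : 1 ≤ r) (hr2 : 2 * r ≤ d)
    (h1 : ∀ m, Q (m+1) + H m = H (m+1) + K m) (hsym : ∀ i ≤ d, H i = H (d - i))
    (h2 : ∀ m, K m = 0 ∨ Q (m+1) = 0) (h3 : ∀ m, Q m = 0 → Q (m+1) = 0)
    (hh : H (r-1) = H r) : (∀ m ≤ r, K m = 0) ∧ Q r = 0 := by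
  obtain ⟨s, rfl⟩ : ∃ s, r = s + 1 := ⟨r - 1, by omega⟩
  simp only [Nat.add_sub_cancel] at hh
  have key : ∀ m b, m < b → Q (m+1) = 0 → H b = H m → K m = 0 := by
    intro m b hb hQ hH
    have hQ' : ∀ j, m + 1 ≤ j → Q j = 0 := by
      intro j hj
      induction j, hj using Nat.le_induction with
      | base => exact hQ
      | succ n _ ih => exact h3 n ih
    have hH' : ∀ j, m + 1 ≤ j → H j ≤ H (m+1) := by
      intro j hj
      induction j, hj using Nat.le_induction with
      | base => exact le_rfl
      | succ n hn ih =>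
        have := h1 n
        have := hQ' (n+1) (by omega)
        omega
    have := hH' b hb
    have := h1 m
    omega
  have hs : K s = 0 ∧ Q (s+1) = 0 := by
    have := h1 s
    rcases h2 s with h | h <;> omega
  refine ⟨fun m hm => ?_, hs.2⟩
  rcases h2 m with h | h
  · exact h
  rcases Nat.lt_or_ge m (s+1) with hlt | hge
  · exact key m (d - m) (by omega) h (hsym m (by omega)).symm
  · have : m = s + 1 := by omega
    subst this
    refine key (s+1) (d - s) (by omega) h ?_
    rw [← hsym s (by omega), hh]

lemma wlp_dich {J : Ideal (MvPolynomial σ 𝕜)} {w : MvPolynomial σ 𝕜} {m : ℕ}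
    (h : (∀ f ∈ quotPiece 𝕜 J m, Ideal.Quotient.mk J w * f = 0 → f = 0) ∨
      (∀ g ∈ quotPiece 𝕜 J (m+1), ∃ f ∈ quotPiece 𝕜 J m, Ideal.Quotient.mk J w * f = g)) :
    kdim J w m = 0 ∨ hilb 𝕜 (J ⊔ Ideal.span {w}) (m+1) = 0 := by
  rcases h with h | h
  · left
    rw [kdim_eq_zero_iff]
    intro g hg hw
    have := h (Ideal.Quotient.mk J g) (mem_quotPiece.mpr ⟨g, hg, rfl⟩)
      (by rw [← map_mul]; exact Ideal.Quotient.eq_zero_iff_mem.mpr hw)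
    exact Ideal.Quotient.eq_zero_iff_mem.mp this
  · right
    rw [hilb_eq_zero_iff]
    intro g hg
    obtain ⟨f, hf, he⟩ := h (Ideal.Quotient.mk J g) (mem_quotPiece.mpr ⟨g, hg, rfl⟩)
    obtain ⟨f, _, rfl⟩ := mem_quotPiece.mp hf
    rw [← map_mul, eq_comm, Ideal.Quotient.eq] at he
    exact mem_sup_span_singleton'.mpr ⟨_, he, f, by ring⟩

lemma agree_transfer {I L : Ideal (MvPolynomial σ 𝕜)} (hI : IsHomogIdeal 𝕜 I) {m : ℕ}
    (h : ∀ f : MvPolynomial σ 𝕜, f.IsHomogeneous m → f ∈ I → f ∈ L)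
    {s : Set (MvPolynomial σ 𝕜)} (hs : s.Finite) (hs' : ∀ f ∈ s, f.IsHomogeneous 1) {f : MvPolynomial σ 𝕜}
    (hf : f.IsHomogeneous m) (hfI : f ∈ I ⊔ Ideal.span s) : f ∈ L ⊔ Ideal.span s := by
  have : Fintype s := hs.fintype
  have hr : s = Set.range (fun a : s => (a : MvPolynomial σ 𝕜)) := by simp
  rw [hr] at hfI
  obtain ⟨l, hl, hlh, c, _, rfl⟩ := decomp hI (y := fun a : s => (a : MvPolynomial σ 𝕜)) (fun j => hs' _ j.2) hf hfI
  refine Ideal.add_mem _ (Ideal.mem_sup_left (h l hlh hl)) (Ideal.sum_mem _ (fun j _ => ?_))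
  exact Ideal.mul_mem_right _ _ (Ideal.mem_sup_right (Ideal.subset_span j.2))

lemma skc_complex (Δ : Set (Finset σ)) (i : ℕ) : IsComplex (skc Δ i) :=
  fun _ hF _ hG H hH hc => hF H (hH.trans hG) hc

lemma subset_skc {Δ : Set (Finset σ)} (hΔ : IsComplex Δ) (i : ℕ) : Δ ⊆ skc Δ i :=
  fun F hF G hG _ => hΔ F hF G hG

lemma SR_skc (Δ : Set (Finset σ)) (i : ℕ) : SRideal 𝕜 (skc Δ i) =
    Ideal.span {m | ∃ G : Finset σ, (G ∉ Δ ∧ G.card ≤ i + 1) ∧ m = ∏ v ∈ G, X v} := by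
  apply le_antisymm
  · unfold SRideal
    rw [Ideal.span_le]
    rintro _ ⟨F, hF, rfl⟩
    simp only [skc, Set.mem_ofPred_eq, not_forall] at hF
    obtain ⟨G, hG, hc, hn⟩ := hF
    rw [← Finset.prod_sdiff hG]
    exact Ideal.mul_mem_left _ _ (Ideal.subset_span ⟨G, ⟨hn, hc⟩, rfl⟩)
  · unfold SRideal
    apply Ideal.span_mono
    rintro _ ⟨G, ⟨hn, hc⟩, rfl⟩
    exact ⟨G, fun h => hn (h G subset_rfl hc), rfl⟩

lemma skc_agree {Δ : Set (Finset σ)} (hΔ : IsComplex Δ) (i m : ℕ) (hm : m ≤ i + 1) (f : MvPolynomial σ 𝕜)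
    (hf : f.IsHomogeneous m) (hfI : f ∈ SRideal 𝕜 Δ) : f ∈ SRideal 𝕜 (skc Δ i) := by
  rw [mem_SRideal (skc_complex Δ i)]
  rw [mem_SRideal hΔ] at hfI
  intro a ha hmem
  refine hfI a ha (hmem _ subset_rfl (le_trans ?_ hm))
  have hdeg : a.degree = m := by
    by_contra hne
    exact (mem_support_iff.mp ha) (hf.coeff_eq_zero hne)
  rw [← hdeg, Finsupp.degree_apply]
  rw [Finset.card_eq_sum_ones]
  exact Finset.sum_le_sum (fun v hv => Nat.one_le_iff_ne_zero.mpr (Finsupp.mem_support_iff.mp hv))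

/-- existence of a large face -/
lemma exists_face {Γ : Set (Finset σ)} (hΓ : IsComplex Γ) (he : ∅ ∈ Γ) {d : ℕ} {y : Fin (d+1) → MvPolynomial σ 𝕜}
    (hy : ∀ j, (y j).IsHomogeneous 1) (hR : HReg (SRideal 𝕜 Γ) y) (r : ℕ)
    (hS : hilb 𝕜 (SRideal 𝕜 Γ ⊔ Ideal.span (Set.range y)) r = 0) (hle : ∀ F ∈ Γ, F.card ≤ d + 1) :
    ∃ F ∈ Γ, F.card = d + 1 := by
  classical
  by_contra hc
  push Not at hc
  have hle' : ∀ F ∈ Γ, F.card ≤ d := fun F hF => by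
    have := hle F hF; have := hc F hF; omega
  have h := HS_SR_mul (𝕜 := 𝕜) hΓ d hle'
  unfold HReg at hR
  rw [pow_succ', mul_assoc, h] at hR
  set J := SRideal 𝕜 Γ ⊔ Ideal.span (Set.range y) with hJ
  let P : Polynomial ℤ := ∑ F : Finset σ with F ∈ Γ, (Polynomial.X ^ F.card * (1 - Polynomial.X) ^ (d - F.card))
  let Q : Polynomial ℤ := ∑ m ∈ Finset.range r, Polynomial.monomial m (hilb 𝕜 J m : ℤ)
  have hQ : (Q : PowerSeries ℤ) = HS J := by
    ext m
    rw [Polynomial.coeff_coe]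
    simp only [Q, Polynomial.finsetSum_coeff, Polynomial.coeff_monomial, HS, PowerSeries.coeff_mk]
    rw [Finset.sum_ite_eq' ]
    split_ifs with hm
    · rfl
    · rw [hilb_zero_of_le hS (by simpa using hm)]; rfl
  have hP : ((1 - Polynomial.X) * P : Polynomial ℤ) = Q := by
    apply Polynomial.coe_injective
    rw [hQ, hR]
    have : (P : PowerSeries ℤ) = ∑ F : Finset σ with F ∈ Γ,
        ((PowerSeries.X : PowerSeries ℤ) ^ F.card * (1 - PowerSeries.X) ^ (d - F.card)) := by
      rw [← Polynomial.coeToPowerSeries.ringHom_apply, map_sum]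
      simp
    rw [Polynomial.coe_mul, this]
    simp
  have h1 := congrArg (Polynomial.eval 1) hP
  simp [Q, Polynomial.eval_finsetSum] at h1
  have h0 : hilb 𝕜 J 0 = 1 := by
    apply hilb_zero_pos
    intro c hc
    have : J ≤ RingHom.ker (constantCoeff (σ := σ) (R := 𝕜)) := by
      rw [hJ, sup_le_iff]
      constructor
      · intro f hf
        rw [mem_SRideal hΓ] at hf
        show coeff 0 f = 0
        by_contra hne
        exact hf 0 (mem_support_iff.mpr hne) (by simpa using he)
      · rw [Ideal.span_le]
        rintro _ ⟨j, rfl⟩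
        show constantCoeff (y j) = 0
        exact (hy j).coeff_eq_zero (by simp)
    simpa using this hc
  have hr : 0 < r := by
    rcases Nat.eq_zero_or_pos r with rfl | h
    · omega
    · exact h
  have h2 : ∀ x ∈ Finset.range r, hilb 𝕜 J x = 0 := by
    intro x hx
    have hnn : ∑ x ∈ Finset.range r, (hilb 𝕜 J x) = 0 := by exact_mod_cast h1.symm
    exact Finset.sum_eq_zero_iff.mp hnn x hx
  have := h2 0 (Finset.mem_range.mpr hr)
  omega

end MainThm

/-- Suppose `char 𝕜 = 0` and let `Δ` be a homology
`(d-1)`-sphere over `𝕜` having the weak Lefschetz property. If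
`h_{r-1}(Δ) = h_r(Δ)` for some `r ≤ d/2`, then `Δ(r-1)` is Cohen–Macaulay
over `𝕜` (its Stanley–Reisner ring is Cohen–Macaulay, of Krull dimension
`d+1`) and has dimension `d`. -/
theorem skc_CM_of_WLP_sphere
    (𝕜 : Type*) [Field 𝕜] [CharZero 𝕜] {V : Type*} [Fintype V] [LinearOrder V]
    (Δ : Set (Finset V)) (d r : ℕ)
    (hsphere : IsHomologySphere 𝕜 Δ (d - 1))
    (hwlp : HasWLP 𝕜 (SRideal 𝕜 Δ) d)
    (hr1 : 1 ≤ r) (hr2 : 2 * r ≤ d)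
    (hh : hVec Δ d (r - 1) = hVec Δ d r) :
    IsCMdim 𝕜 (SRideal 𝕜 (skc Δ (r - 1))) (d + 1) ∧
    (∀ F ∈ skc Δ (r - 1), F.card ≤ d + 1) ∧
    (∃ F ∈ skc Δ (r - 1), F.card = d + 1) := by
  classical
  have : Infinite 𝕜 := inferInstance
  have hΔ : IsComplex Δ := hsphere.1
  have hcard : ∀ F ∈ Δ, F.card ≤ d := fun F hF => by have := hsphere.2.1 F hF; omega
  have hemp : ∅ ∈ Δ := by
    obtain ⟨F, hF, _⟩ := hsphere.2.2.1
    exact hΔ F hF _ (Finset.empty_subset _)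
  obtain ⟨⟨-, hreg⟩, Θ, hΘ, w, hw, hW⟩ := hwlp
  have hΘR := hreg Θ hΘ
  have hΘ1 : ∀ j, (Θ j).IsHomogeneous 1 := hΘ.1
  have hw1 : w.IsHomogeneous 1 := hw
  have hI := SRideal_homog (𝕜 := 𝕜) Δ
  set I := SRideal 𝕜 Δ with hIdef
  set J := I ⊔ Ideal.span (Set.range Θ) with hJ
  have hJh : IsHomogIdeal 𝕜 J := isHomog_linspan _ (by rintro _ ⟨j, rfl⟩; exact hΘ1 j) hI
  have hH : ∀ m, (hilb 𝕜 J m : ℤ) = hVec Δ d m := by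
    intro m
    have h := (isRegSeq_iff_HReg hI hΘ1).mp hΘR
    unfold HReg at h
    rw [HS_SR_mul hΔ d hcard] at h
    have h2 := congrArg (PowerSeries.coeff m) h
    rw [coeff_hVec] at h2
    simpa [HS] using h2
  obtain ⟨hK, hQ⟩ := wlp_num (hilb 𝕜 J) (kdim J w) (hilb 𝕜 (J ⊔ Ideal.span {w})) d r hr1 hr2
    (fun m => hilb_step hJh hw1 m)
    (fun i hi => by
      have := dehn_sommerville (𝕜 := 𝕜) (by omega) hsphere i hi
      rw [← hH, ← hH] at this
      exact_mod_cast this)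
    (fun m => wlp_dich (hW m)) (fun m hm => hilb_succ_zero hm)
    (by rw [← hH, ← hH] at hh; exact_mod_cast hh)
  set Γ := skc Δ (r - 1) with hΓ
  have hΓc : IsComplex Γ := skc_complex Δ _
  have hΓe : ∅ ∈ Γ := subset_skc hΔ _ hemp
  have hL := SRideal_homog (𝕜 := 𝕜) Γ
  set L := SRideal 𝕜 Γ with hLdef
  have hagree : ∀ m ≤ r, ∀ f : MvPolynomial V 𝕜, f.IsHomogeneous m → f ∈ I → f ∈ L := fun m hm f hf hfI =>
    skc_agree hΔ (r-1) m (by omega) f hf hfI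
  have hLI : L ≤ I := by
    apply Ideal.span_mono
    rintro _ ⟨F, hF, rfl⟩
    exact ⟨F, fun h => hF (subset_skc hΔ _ h), rfl⟩
  let y : Fin (d+1) → MvPolynomial V 𝕜 := Fin.snoc Θ w
  have hyc : (fun j : Fin d => y j.castSucc) = Θ := by funext j; simp [y]
  have hyl : y (Fin.last d) = w := by simp [y]
  have hy : ∀ j, (y j).IsHomogeneous 1 := by
    intro j
    induction j using Fin.lastCases with
    | last => rw [hyl]; exact hw1
    | cast j => rw [show y j.castSucc = Θ j from congrFun hyc j]; exact hΘ1 j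
  have hpart : partI I y d = J := by
    rw [partI_castSucc I y d le_rfl, hyc, partI_last]
  have hIk : ∀ m ≤ r, ∀ i : Fin (d+1), kdim (partI I y i) (y i) m = 0 := by
    intro m hm i
    induction i using Fin.lastCases with
    | last => rw [hyl, Fin.val_last, hpart]; exact hK m hm
    | cast i =>
      rw [show y i.castSucc = Θ i from congrFun hyc i, Fin.val_castSucc, partI_castSucc I y i i.2.le, hyc,
        kdim_eq_zero_iff]
      intro g _ hg
      exact hΘR i g hg
  have hLk : ∀ m ≤ r, ∀ i : Fin (d+1), kdim (partI L y i) (y i) m = 0 := by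
    intro m hm i
    rw [kdim_eq_zero_iff]
    intro g hg hyg
    have h1 : g ∈ partI I y i := (kdim_eq_zero_iff _ _ _).mp (hIk m hm i) g hg
      ((sup_le_sup_right hLI _) hyg)
    exact agree_transfer hI (hagree m hm) (Set.toFinite _) (by rintro _ ⟨j, _, rfl⟩; exact hy j) hg h1
  have hLS : hilb 𝕜 (L ⊔ Ideal.span (Set.range y)) r = 0 := by
    rw [hilb_eq_zero_iff] at hQ ⊢
    intro g hg
    have h1 : I ⊔ Ideal.span (Set.range y) = J ⊔ Ideal.span {w} := by
      rw [← partI_last, ← hpart, ← hyl]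
      exact partI_succ I y (Fin.last d)
    exact agree_transfer hI (hagree r le_rfl) (Set.toFinite _) (by rintro _ ⟨j, rfl⟩; exact hy j) hg
      (by rw [h1]; exact hQ g hg)
  have hyreg : IsRegSeq 𝕜 L y := by
    refine koszul_reg r (SR_skc Δ (r-1)) ?_ hy ?_ hLk ?_
    · rintro _ ⟨G, ⟨_, hG⟩, rfl⟩
      refine ⟨G.card, by omega, ?_⟩
      have := MvPolynomial.IsHomogeneous.prod G (fun v => (MvPolynomial.X v : MvPolynomial V 𝕜)) (fun _ => 1)
        (fun v _ => MvPolynomial.isHomogeneous_X 𝕜 v)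
      simpa using this
    · intro c hc
      rw [mem_SRideal hΓc] at hc
      by_contra hne
      exact hc 0 (by simp [MvPolynomial.mem_support_iff, hne]) (by simpa using hΓe)
    · intro m hm
      exact (hilb_eq_zero_iff _ _).mp (hilb_zero_of_le hLS hm)
  have hyR : HReg L y := (isRegSeq_iff_HReg hL hy).mp hyreg
  have hylsop : IsLsop 𝕜 L y := ⟨hy, finite_of_hilb r (fun m hm => hilb_zero_of_le hLS hm)⟩
  have hyS : Spans Γ y := lsop_spans hΓc hylsop
  have hΓcard : ∀ F ∈ Γ, F.card ≤ d + 1 := fun F hF => spans_card hy hyS hF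
  obtain ⟨F0, hF0, hF0c⟩ := exists_face hΓc hΓe hy hyR r hLS hΓcard
  refine ⟨⟨?_, ?_⟩, hΓcard, F0, hF0, hF0c⟩
  · apply le_antisymm
    · exact Nat.sInf_le ⟨y, hylsop⟩
    · refine le_csInf ⟨_, y, hylsop⟩ ?_
      rintro m ⟨φ, hφ⟩
      rw [← hF0c]
      exact spans_card hφ.1 (lsop_spans hΓc hφ) hF0
  · intro φ hφ
    have hφ1 : ∀ j, (φ j).IsHomogeneous 1 := hφ.1
    rw [isRegSeq_iff_HReg hL hφ1]
    exact HReg_all (d+1) y φ hy hyS hφ1 (lsop_spans hΓc hφ) (fun j hj => by omega) hyR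
end
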